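/- arXiv:2103.16691 — 5 statements merged into one kernel-verified Lean document; each statement's English description precedes it below -/
import Mathlib

section
/- The element γ = (xy)² − y²x² is central in the binary cubic generic Clifford algebra A; moreover the two expressions (xy)² − y²x² and (yx)² − x²y² define the same element of A. -/
noncomputable section

open FreeAlgebra

variable (k : Type*) [Field k]

/-- Relations of the binary cubic generic Clifford algebra. -/
inductive GCRel : FreeAlgebra k (Fin 2) → FreeAlgebra k (Fin 2) → Prop
  | rel1 : GCRel ((ι k 0) ^ 3 * ι k 1) (ι k 1 * (ι k 0) ^ 3)
  | rel2 : GCRel (ι k 0 * (ι k 1) ^ 3) ((ι k 1) ^ 3 * ι k 0)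
  | rel3 : GCRel ((ι k 0) ^ 2 * (ι k 1) ^ 2 + (ι k 0 * ι k 1) ^ 2)
      ((ι k 1) ^ 2 * (ι k 0) ^ 2 + (ι k 1 * ι k 0) ^ 2)

/-- The binary cubic generic Clifford algebra. -/
abbrev GCA := RingQuot (GCRel k)

/-- The generator x. -/
def gx : GCA k := RingQuot.mkAlgHom k (GCRel k) (ι k 0)

/-- The generator y. -/
def gy : GCA k := RingQuot.mkAlgHom k (GCRel k) (ι k 1)

/-- α = x²y + xyx + yx². -/
def gα : GCA k := gx k ^ 2 * gy k + gx k * gy k * gx k + gy k * gx k ^ 2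

/-- β = xy² + yxy + y²x. -/
def gβ : GCA k := gx k * gy k ^ 2 + gy k * gx k * gy k + gy k ^ 2 * gx k

/-- γ = (xy)² − y²x². -/
def gγ : GCA k := (gx k * gy k) ^ 2 - gy k ^ 2 * gx k ^ 2

/-- δ = yx − ω·xy. -/
def gδ (ω : k) : GCA k := gy k * gx k - algebraMap k (GCA k) ω * (gx k * gy k)

end

theorem gc_rel1 (k : Type*) [Field k] : gx k ^ 3 * gy k = gy k * gx k ^ 3 := by
  simpa [gx, gy] using RingQuot.mkAlgHom_rel k (GCRel.rel1 (k := k))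

theorem gc_rel2 (k : Type*) [Field k] : gx k * gy k ^ 3 = gy k ^ 3 * gx k := by
  simpa [gx, gy] using RingQuot.mkAlgHom_rel k (GCRel.rel2 (k := k))

theorem gc_rel3 (k : Type*) [Field k] :
    gx k ^ 2 * gy k ^ 2 + (gx k * gy k) ^ 2 = gy k ^ 2 * gx k ^ 2 + (gy k * gx k) ^ 2 := by
  simpa [gx, gy] using RingQuot.mkAlgHom_rel k (GCRel.rel3 (k := k))

theorem gc_eq (k : Type*) [Field k] :
    (gx k * gy k) ^ 2 - gy k ^ 2 * gx k ^ 2 = (gy k * gx k) ^ 2 - gx k ^ 2 * gy k ^ 2 := by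
  rw [sub_eq_sub_iff_add_eq_add, add_comm, gc_rel3, add_comm]

theorem gc_x (k : Type*) [Field k] : gx k * gγ k = gγ k * gx k := by
  have h : gx k ^ 3 * gy k ^ 2 = gy k ^ 2 * gx k ^ 3 :=
    (show Commute (gx k ^ 3) (gy k) from gc_rel1 k).pow_right 2
  have e1 : gx k * gγ k = gx k * gy k * gx k * gy k * gx k - gx k ^ 3 * gy k ^ 2 := by
    rw [gγ, gc_eq]; simp only [pow_succ, pow_zero, one_mul, mul_sub, sub_mul, mul_assoc]
  have e2 : gγ k * gx k = gx k * gy k * gx k * gy k * gx k - gy k ^ 2 * gx k ^ 3 := by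
    rw [gγ]; simp only [pow_succ, pow_zero, one_mul, mul_sub, sub_mul, mul_assoc]
  rw [e1, e2, h]

theorem gc_y (k : Type*) [Field k] : gy k * gγ k = gγ k * gy k := by
  have h : gx k ^ 2 * gy k ^ 3 = gy k ^ 3 * gx k ^ 2 :=
    (show Commute (gx k) (gy k ^ 3) from gc_rel2 k).pow_left 2
  have e1 : gy k * gγ k = gy k * gx k * gy k * gx k * gy k - gy k ^ 3 * gx k ^ 2 := by
    rw [gγ]; simp only [pow_succ, pow_zero, one_mul, mul_sub, sub_mul, mul_assoc]
  have e2 : gγ k * gy k = gy k * gx k * gy k * gx k * gy k - gx k ^ 2 * gy k ^ 3 := by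
    rw [gγ, gc_eq]; simp only [pow_succ, pow_zero, one_mul, mul_sub, sub_mul, mul_assoc]
  rw [e1, e2, h]

theorem stmt0 (k : Type*) [Field k] (h2 : (2 : k) ≠ 0) (h3 : (3 : k) ≠ 0)
    (ω : k) (hω : IsPrimitiveRoot ω 3) :
    gγ k ∈ Set.center (GCA k) ∧
      (gx k * gy k) ^ 2 - gy k ^ 2 * gx k ^ 2 =
        (gy k * gx k) ^ 2 - gx k ^ 2 * gy k ^ 2 := by
  refine ⟨?_, gc_eq k⟩
  rw [Semigroup.mem_center_iff]
  intro g
  obtain ⟨a, rfl⟩ := RingQuot.mkAlgHom_surjective k (GCRel k) g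
  change Commute _ _
  induction a using FreeAlgebra.induction with
  | grade0 r => rw [AlgHom.commutes]; exact Algebra.commutes r _
  | grade1 i =>
    fin_cases i
    · exact gc_x k
    · exact gc_y k
  | mul a b ha hb => rw [map_mul]; exact ha.mul_left hb
  | add a b ha hb => rw [map_add]; exact ha.add_left hb
end

section
/- The element δ³, where δ = yx − ω·xy, is central in the binary cubic generic Clifford algebra A. -/
theorem gc_comm_x0 {R : Type*} [Ring R] (x y : R)
    (h1 : x*x*x*y - y*x*x*x = 0) (h2 : x*y*y*y - y*y*y*x = 0)
    (h3 : x*x*y*y + x*y*x*y - y*y*x*x - y*x*y*x = 0) :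
    x * (y*x*y*x*y*x - x*y*x*y*x*y - (y*x*x*y*x*y + x*y*y*x*x*y + x*y*x*y*y*x)) = (y*x*y*x*y*x - x*y*x*y*x*y - (y*x*x*y*x*y + x*y*y*x*x*y + x*y*x*y*y*x)) * x := by
  rw [← sub_eq_zero]
  have e : x * (y*x*y*x*y*x - x*y*x*y*x*y - (y*x*x*y*x*y + x*y*y*x*x*y + x*y*x*y*y*x)) - (y*x*y*x*y*x - x*y*x*y*x*y - (y*x*x*y*x*y + x*y*y*x*x*y + x*y*x*y*y*x)) * x =
    (-1)*(1*(x*x*y*y + x*y*x*y - y*y*x*x - y*x*y*x)*x*x*y) + (-1)*(y*x*y*(x*x*x*y - y*x*x*x)*1) + (-1)*(x*(x*x*y*y + x*y*x*y - y*y*x*x - y*x*y*x)*x*y) + (1)*(1*(x*x*x*y - y*x*x*x)*y*x*y) + (1)*(y*(x*x*x*y - y*x*x*x)*x*y) + (-1)*(x*(x*x*y*y + x*y*x*y - y*y*x*x - y*x*y*x)*y*x) + (1)*(1*(x*x*x*y - y*x*x*x)*y*y*x) + (-1)*(x*y*x*(x*x*y*y + x*y*x*y - y*y*x*x - y*x*y*x)*1)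 + (1)*(x*y*(x*x*x*y - y*x*x*x)*y) + (1)*(y*x*(x*x*y*y + x*y*x*y - y*y*x*x - y*x*y*x)*x) := by
    simp only [mul_add, add_mul, mul_sub, sub_mul, mul_assoc, mul_neg, neg_mul, one_mul, mul_one,
      show (-2 : R) = -1 + -1 by norm_num]
    abel
  rw [e]
  simp only [h1, h2, h3, mul_zero, zero_mul, add_zero]

theorem gc_comm_x1 {R : Type*} [Ring R] (x y : R)
    (h1 : x*x*x*y - y*x*x*x = 0) (h2 : x*y*y*y - y*y*y*x = 0)
    (h3 : x*x*y*y + x*y*x*y - y*y*x*x - y*x*y*x = 0) :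
    x * (-(y*x*y*x*x*y + y*x*x*y*y*x + x*y*y*x*y*x) - (y*x*x*y*x*y + x*y*y*x*x*y + x*y*x*y*y*x)) = (-(y*x*y*x*x*y + y*x*x*y*y*x + x*y*y*x*y*x) - (y*x*x*y*x*y + x*y*y*x*x*y + x*y*x*y*y*x)) * x := by
  rw [← sub_eq_zero]
  have e : x * (-(y*x*y*x*x*y + y*x*x*y*y*x + x*y*y*x*y*x) - (y*x*x*y*x*y + x*y*y*x*x*y + x*y*x*y*y*x)) - (-(y*x*y*x*x*y + y*x*x*y*y*x + x*y*y*x*y*x) - (y*x*x*y*x*y + x*y*y*x*x*y + x*y*x*y*y*x)) * x =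
    (-1)*(1*(x*x*y*y + x*y*x*y - y*y*x*x - y*x*y*x)*x*x*y) + (-1)*(y*x*y*(x*x*x*y - y*x*x*x)*1) + (-1)*(y*y*x*(x*x*x*y - y*x*x*x)*1) + (-1)*(1*(x*x*y*y + x*y*x*y - y*y*x*x - y*x*y*x)*x*y*x) + (-1)*(x*(x*x*y*y + x*y*x*y - y*y*x*x - y*x*y*x)*y*x) + (1)*(1*(x*x*x*y - y*x*x*x)*y*y*x) + (-1)*(x*y*(x*x*y*y + x*y*x*y - y*y*x*x - y*x*y*x)*x) + (-1)*(x*y*x*(x*x*y*y + x*y*x*y - y*y*x*x - y*x*y*x)*1) + (1)*(x*y*(x*x*x*y - y*x*x*x)*y) + (1)*(x*y*y*(x*x*x*y - y*x*x*x)*1) + (1)*(y*(x*x*y*y + x*y*x*y - y*y*x*x - y*x*y*x)*x*x) + (1)*(y*x*(x*x*y*y + x*y*x*y - y*y*x*x - y*x*y*x)*x) + (-1)*(y*y*(x*x*x*y - y*x*x*x)*x) := by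
    simp only [mul_add, add_mul, mul_sub, sub_mul, mul_assoc, mul_neg, neg_mul, one_mul, mul_one,
      show (-2 : R) = -1 + -1 by norm_num]
    abel
  rw [e]
  simp only [h1, h2, h3, mul_zero, zero_mul, add_zero]

theorem gc_comm_y0 {R : Type*} [Ring R] (x y : R)
    (h1 : x*x*x*y - y*x*x*x = 0) (h2 : x*y*y*y - y*y*y*x = 0)
    (h3 : x*x*y*y + x*y*x*y - y*y*x*x - y*x*y*x = 0) :
    y * (y*x*y*x*y*x - x*y*x*y*x*y - (y*x*x*y*x*y + x*y*y*x*x*y + x*y*x*y*y*x)) = (y*x*y*x*y*x - x*y*x*y*x*y - (y*x*x*y*x*y + x*y*y*x*x*y + x*y*x*y*y*x)) * y := by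
  rw [← sub_eq_zero]
  have e : y * (y*x*y*x*y*x - x*y*x*y*x*y - (y*x*x*y*x*y + x*y*y*x*x*y + x*y*x*y*y*x)) - (y*x*y*x*y*x - x*y*x*y*x*y - (y*x*x*y*x*y + x*y*y*x*x*y + x*y*x*y*y*x)) * y =
    (-1)*(y*y*y*(x*x*x*y - y*x*x*x)*1) + (-1)*(x*(x*x*y*y + x*y*x*y - y*y*x*x - y*x*y*x)*y*y) + (1)*(1*(x*x*x*y - y*x*x*x)*y*y*y) + (1)*(x*x*y*(x*y*y*y - y*y*y*x)*1) + (1)*(x*(x*y*y*y - y*y*y*x)*y*x) + (1)*(1*(x*y*y*y - y*y*y*x)*x*y*x) + (1)*(1*(x*x*y*y + x*y*x*y - y*y*x*x - y*x*y*x)*y*x*y) + (-1)*(x*(x*y*y*y - y*y*y*x)*x*y) + (-1)*(1*(x*y*y*y - y*y*y*x)*x*x*y) + (1)*(y*x*(x*x*y*y + x*y*x*y - y*y*x*x - y*x*y*x)*y) + (-1)*(y*(x*x*y*y + x*y*x*y - y*y*x*x - y*x*y*x)*y*x) + (1)*(y*x*(x*y*y*y - y*y*y*x)*x) + (1)*(y*(x*y*y*y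 - y*y*y*x)*x*x) := by
    simp only [mul_add, add_mul, mul_sub, sub_mul, mul_assoc, mul_neg, neg_mul, one_mul, mul_one,
      show (-2 : R) = -1 + -1 by norm_num]
    abel
  rw [e]
  simp only [h1, h2, h3, mul_zero, zero_mul, add_zero]

theorem gc_comm_y1 {R : Type*} [Ring R] (x y : R)
    (h1 : x*x*x*y - y*x*x*x = 0) (h2 : x*y*y*y - y*y*y*x = 0)
    (h3 : x*x*y*y + x*y*x*y - y*y*x*x - y*x*y*x = 0) :
    y * (-(y*x*y*x*x*y + y*x*x*y*y*x + x*y*y*x*y*x) - (y*x*x*y*x*y + x*y*y*x*x*y + x*y*x*y*y*x)) = (-(y*x*y*x*x*y + y*x*x*y*y*x + x*y*y*x*y*x) - (y*x*x*y*x*y + x*y*y*x*x*y + x*y*x*y*y*x)) * y := by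
  rw [← sub_eq_zero]
  have e : y * (-(y*x*y*x*x*y + y*x*x*y*y*x + x*y*y*x*y*x) - (y*x*x*y*x*y + x*y*y*x*x*y + x*y*x*y*y*x)) - (-(y*x*y*x*x*y + y*x*x*y*y*x + x*y*y*x*y*x) - (y*x*x*y*x*y + x*y*y*x*x*y + x*y*x*y*y*x)) * y =
    (-1)*(x*y*(x*x*y*y + x*y*x*y - y*y*x*x - y*x*y*x)*y) + (-2)*(1*(x*y*y*y - y*y*y*x)*x*x*y) + (1)*(x*y*x*(x*y*y*y - y*y*y*x)*1) + (-1)*(x*(x*x*y*y + x*y*x*y - y*y*x*x - y*x*y*x)*y*y) + (1)*(1*(x*x*x*y - y*x*x*x)*y*y*y) + (1)*(x*x*y*(x*y*y*y - y*y*y*x)*1) + (1)*(1*(x*x*y*y + x*y*x*y - y*y*x*x - y*x*y*x)*y*x*y) + (-1)*(x*(x*y*y*y - y*y*y*x)*x*y) + (-1)*(y*y*y*(x*x*x*y - y*x*x*x)*1) + (1)*(y*(x*x*y*y + x*y*x*y - y*y*x*x - y*x*y*x)*x*y) + (1)*(y*x*(x*x*y*y + x*y*x*y - y*y*x*x - y*x*y*x)*y)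 + (1)*(y*x*y*(x*x*y*y + x*y*x*y - y*y*x*x - y*x*y*x)*1) + (1)*(y*(x*y*y*y - y*y*y*x)*x*x) + (1)*(1*(x*x*y*y + x*y*x*y - y*y*x*x - y*x*y*x)*y*y*x) := by
    simp only [mul_add, add_mul, mul_sub, sub_mul, mul_assoc, mul_neg, neg_mul, one_mul, mul_one,
      show (-2 : R) = -1 + -1 by norm_num]
    abel
  rw [e]
  simp only [h1, h2, h3, mul_zero, zero_mul, add_zero]

theorem gc_cube {k R : Type*} [Field k] [Ring R] [Algebra k R] (ω : k) (hω : ω ^ 2 = -1 - ω)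
    (x y : R) : (y * x - algebraMap k R ω * (x * y)) ^ 3 =
    (y*x*y*x*y*x - x*y*x*y*x*y - (y*x*x*y*x*y + x*y*y*x*x*y + x*y*x*y*y*x)) + ω • (-(y*x*y*x*x*y + y*x*x*y*y*x + x*y*y*x*y*x) - (y*x*x*y*x*y + x*y*y*x*x*y + x*y*x*y*y*x)) := by
  have h3 : ω * (ω * ω) = 1 := by linear_combination (ω - 1) * hω
  have h2 : ω * ω = -1 - ω := by linear_combination hω
  rw [← Algebra.smul_def, pow_succ, pow_two]
  simp only [mul_sub, sub_mul, mul_smul_comm, smul_mul_assoc, smul_sub, smul_smul, mul_assoc, h3, h2]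
  module

theorem stmt2 (k : Type*) [Field k] (h2 : (2 : k) ≠ 0) (h3 : (3 : k) ≠ 0)
    (ω : k) (hω : IsPrimitiveRoot ω 3) :
    gδ k ω ^ 3 ∈ Set.center (GCA k) := by
  have hw : ω ^ 2 = -1 - ω := by
    have h := hω.pow_eq_one
    have hne : ω - 1 ≠ 0 := sub_ne_zero.mpr (hω.ne_one (by norm_num))
    apply mul_left_cancel₀ hne
    linear_combination h
  have r1 : gx k * gx k * gx k * gy k - gy k * gx k * gx k * gx k = 0 := by
    have h := RingQuot.mkAlgHom_rel k (GCRel.rel1 (k := k))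
    simp only [map_mul, map_pow] at h
    change gx k ^ 3 * gy k = gy k * gx k ^ 3 at h
    rw [sub_eq_zero]
    simpa only [pow_succ, pow_zero, one_mul, mul_assoc] using h
  have r2 : gx k * gy k * gy k * gy k - gy k * gy k * gy k * gx k = 0 := by
    have h := RingQuot.mkAlgHom_rel k (GCRel.rel2 (k := k))
    simp only [map_mul, map_pow] at h
    change gx k * gy k ^ 3 = gy k ^ 3 * gx k at h
    rw [sub_eq_zero]
    simpa only [pow_succ, pow_zero, one_mul, mul_assoc] using h
  have r3 : gx k * gx k * gy k * gy k + gx k * gy k * gx k * gy k - gy k * gy k * gx k * gx k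
      - gy k * gx k * gy k * gx k = 0 := by
    have h := RingQuot.mkAlgHom_rel k (GCRel.rel3 (k := k))
    simp only [map_mul, map_pow, map_add] at h
    change gx k ^ 2 * gy k ^ 2 + (gx k * gy k) ^ 2
      = gy k ^ 2 * gx k ^ 2 + (gy k * gx k) ^ 2 at h
    rw [sub_sub, sub_eq_zero]
    simpa only [pow_succ, pow_zero, one_mul, mul_assoc] using h
  have hx : gx k * gδ k ω ^ 3 = gδ k ω ^ 3 * gx k := by
    rw [gδ, gc_cube ω hw, mul_add, add_mul, mul_smul_comm, smul_mul_assoc,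
      gc_comm_x0 _ _ r1 r2 r3, gc_comm_x1 _ _ r1 r2 r3]
  have hy : gy k * gδ k ω ^ 3 = gδ k ω ^ 3 * gy k := by
    rw [gδ, gc_cube ω hw, mul_add, add_mul, mul_smul_comm, smul_mul_assoc,
      gc_comm_y0 _ _ r1 r2 r3, gc_comm_y1 _ _ r1 r2 r3]
  rw [Semigroup.mem_center_iff]
  intro g
  obtain ⟨f, rfl⟩ := RingQuot.mkAlgHom_surjective k (GCRel k) g
  induction f using FreeAlgebra.induction with
  | grade0 r =>
    rw [AlgHom.commutes]
    exact Algebra.commutes r _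
  | grade1 i =>
    fin_cases i
    · exact hx
    · exact hy
  | mul a b ha hb => rw [map_mul, mul_assoc, hb, ← mul_assoc, ha, mul_assoc]
  | add a b ha hb => rw [map_add, add_mul, mul_add, ha, hb]
end

section
/- The binary cubic generic Clifford algebra A is a free module of rank 18 over the central subalgebra S = k[x³, y³, α, β, γ], with basis given by the 18 elements 1; x, y; x², xy, yx, y²; x²y, xy², y²x, yx²; x²y², xyxy, xyx², y²xy; x²y²x, xyxy²; x²y²xy. -/
/-- The 18 basis elements of `A` over `S = k[x³, y³, α, β, γ]`. -/
noncomputable def gcaBasis (k : Type*) [Field k] : Fin 18 → GCA k :=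
  ![1,
    gx k, gy k,
    gx k ^ 2, gx k * gy k, gy k * gx k, gy k ^ 2,
    gx k ^ 2 * gy k, gx k * gy k ^ 2, gy k ^ 2 * gx k, gy k * gx k ^ 2,
    gx k ^ 2 * gy k ^ 2, gx k * gy k * gx k * gy k, gx k * gy k * gx k ^ 2,
      gy k ^ 2 * gx k * gy k,
    gx k ^ 2 * gy k ^ 2 * gx k, gx k * gy k * gx k * gy k ^ 2,
    gx k ^ 2 * gy k ^ 2 * gx k * gy k]

namespace GCAux

set_option linter.unusedSimpArgs false

section Rep

variable {R : Type*} [CommRing R] (a y c d e : R)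

/-- Left multiplication by `x` on the rank six right module. -/
def repX : Module.End R (Fin 6 → R) where
  toFun v := ![a * v 2, v 0, v 1, a * v 5, v 3, v 4]
  map_add' u v := by
    ext i; fin_cases i <;> simp <;> ring
  map_smul' r v := by
    ext i; fin_cases i <;> simp <;> ring

/-- Left multiplication by `y` on the rank six right module. -/
def repY : Module.End R (Fin 6 → R) where
  toFun v := ![y * v 0 + c * v 2 + d * v 3 + e * v 4, -y ^ 2 * v 3 - e * v 5,
    -y * v 2 + y ^ 2 * v 4 - d * v 5, v 1 - y * v 3 + c * v 5, -v 2, y * v 5]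
  map_add' u v := by
    ext i; fin_cases i <;> simp <;> ring
  map_smul' r v := by
    ext i; fin_cases i <;> simp <;> ring

theorem repX_apply (v : Fin 6 → R) :
    repX a v = ![a * v 2, v 0, v 1, a * v 5, v 3, v 4] := rfl

theorem repY_apply (v : Fin 6 → R) :
    repY y c d e v = ![y * v 0 + c * v 2 + d * v 3 + e * v 4, -y ^ 2 * v 3 - e * v 5,
    -y * v 2 + y ^ 2 * v 4 - d * v 5, v 1 - y * v 3 + c * v 5, -v 2, y * v 5] := rfl

theorem repX_cube : repX a ^ 3 = algebraMap R (Module.End R (Fin 6 → R)) a := by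
  refine LinearMap.ext fun v => ?_
  ext i
  fin_cases i <;> simp [pow_succ, repX_apply]

theorem repY_cube :
    repY y c d e ^ 3 = algebraMap R (Module.End R (Fin 6 → R)) (y ^ 3) := by
  refine LinearMap.ext fun v => ?_
  ext i
  fin_cases i <;> simp [pow_succ, repY_apply] <;> ring

theorem rep_alpha :
    repX a ^ 2 * repY y c d e + repX a * repY y c d e * repX a + repY y c d e * repX a ^ 2
      = algebraMap R (Module.End R (Fin 6 → R)) c := by
  refine LinearMap.ext fun v => ?_
  ext i
  fin_cases i <;> simp [pow_succ, repY_apply, repX_apply] <;> ring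

theorem rep_beta :
    repX a * repY y c d e ^ 2 + repY y c d e * repX a * repY y c d e + repY y c d e ^ 2 * repX a
      = algebraMap R (Module.End R (Fin 6 → R)) d := by
  refine LinearMap.ext fun v => ?_
  ext i
  fin_cases i <;> simp [pow_succ, repY_apply, repX_apply] <;> ring

theorem rep_gamma :
    (repX a * repY y c d e) ^ 2 - repY y c d e ^ 2 * repX a ^ 2
      = algebraMap R (Module.End R (Fin 6 → R)) e := by
  refine LinearMap.ext fun v => ?_
  ext i
  fin_cases i <;> simp [pow_succ, repY_apply, repX_apply] <;> ring

theorem rep_rel3 :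
    repX a ^ 2 * repY y c d e ^ 2 + (repX a * repY y c d e) ^ 2
      = repY y c d e ^ 2 * repX a ^ 2 + (repY y c d e * repX a) ^ 2 := by
  have h := Algebra.commutes c (repY y c d e)
  rw [← rep_alpha a y c d e] at h
  rw [← sub_eq_zero] at h ⊢
  rw [← h]
  simp only [mul_add, add_mul, mul_sub, sub_mul, pow_succ, pow_zero, one_mul, mul_assoc]; abel

end Rep

theorem expand_indep {R : Type*} [CommRing R] (p q r : Polynomial R)
    (h : Polynomial.expand R 3 p + Polynomial.X * Polynomial.expand R 3 q
      + Polynomial.X ^ 2 * Polynomial.expand R 3 r = 0) : p = 0 ∧ q = 0 ∧ r = 0 := by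
  have key : ∀ n, p.coeff n = 0 ∧ q.coeff n = 0 ∧ r.coeff n = 0 := by
    intro n
    have c0 := congrArg (fun f => Polynomial.coeff f (3 * n)) h
    have c1 := congrArg (fun f => Polynomial.coeff f (3 * n + 1)) h
    have c2 := congrArg (fun f => Polynomial.coeff f (3 * n + 2)) h
    simp only [Polynomial.coeff_add, Polynomial.coeff_zero, Polynomial.coeff_X_mul,
      Polynomial.coeff_X_pow_mul] at c0 c1 c2
    have e1 : (Polynomial.X ^ 2 * Polynomial.expand R 3 r).coeff (3 * n + 1) = 0 := by
      rw [Polynomial.coeff_X_pow_mul']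
      split_ifs with hh
      · rw [Polynomial.coeff_expand (by norm_num), if_neg (by omega)]
      · rfl
    have e0 : (Polynomial.X ^ 2 * Polynomial.expand R 3 r).coeff (3 * n) = 0 := by
      rw [Polynomial.coeff_X_pow_mul']
      split_ifs with hh
      · rw [Polynomial.coeff_expand (by norm_num), if_neg (by omega)]
      · rfl
    have e0' : (Polynomial.X * Polynomial.expand R 3 q).coeff (3 * n) = 0 := by
      rw [← pow_one Polynomial.X, Polynomial.coeff_X_pow_mul']
      split_ifs with hh
      · rw [Polynomial.coeff_expand (by norm_num), if_neg (by omega)]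
      · rfl
    rw [e0, e0'] at c0
    rw [e1] at c1
    have g0 : ∀ f : Polynomial R, (Polynomial.expand R 3 f).coeff (3 * n) = f.coeff n := by
      intro f
      rw [Polynomial.coeff_expand (by norm_num), if_pos (by omega), show 3 * n / 3 = n by omega]
    have g1 : ∀ f : Polynomial R, (Polynomial.expand R 3 f).coeff (3 * n + 1) = 0 := by
      intro f
      rw [Polynomial.coeff_expand (by norm_num), if_neg (by omega)]
    have g2 : ∀ f : Polynomial R, (Polynomial.expand R 3 f).coeff (3 * n + 2) = 0 := by
      intro f
      rw [Polynomial.coeff_expand (by norm_num), if_neg (by omega)]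
    simp only [g0, g1, g2, add_zero, zero_add] at c0 c1 c2
    exact ⟨c0, c1, c2⟩
  exact ⟨Polynomial.ext fun n => by simpa using (key n).1,
    Polynomial.ext fun n => by simpa using (key n).2.1,
    Polynomial.ext fun n => by simpa using (key n).2.2⟩

section Alg

variable (k : Type*) [Field k]

theorem rel1 : gx k ^ 3 * gy k = gy k * gx k ^ 3 := by
  simpa [gx, gy] using RingQuot.mkAlgHom_rel k (GCRel.rel1 (k := k))

theorem rel2 : gx k * gy k ^ 3 = gy k ^ 3 * gx k := by
  simpa [gx, gy] using RingQuot.mkAlgHom_rel k (GCRel.rel2 (k := k))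

theorem rel3 : gx k ^ 2 * gy k ^ 2 + (gx k * gy k) ^ 2
    = gy k ^ 2 * gx k ^ 2 + (gy k * gx k) ^ 2 := by
  simpa [gx, gy] using RingQuot.mkAlgHom_rel k (GCRel.rel3 (k := k))

theorem gca_induction {P : GCA k → Prop} (hs : ∀ r, P (algebraMap k _ r))
    (hx : P (gx k)) (hy : P (gy k)) (hm : ∀ a b, P a → P b → P (a * b))
    (ha : ∀ a b, P a → P b → P (a + b)) (a : GCA k) : P a := by
  obtain ⟨f, rfl⟩ := RingQuot.mkAlgHom_surjective k (GCRel k) a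
  induction f using FreeAlgebra.induction with
  | grade0 r => simpa using hs r
  | grade1 i => fin_cases i; exacts [hx, hy]
  | mul a b h1 h2 => rw [map_mul]; exact hm _ _ h1 h2
  | add a b h1 h2 => rw [map_add]; exact ha _ _ h1 h2

theorem mem_center {z : GCA k} (hx : gx k * z = z * gx k) (hy : gy k * z = z * gy k) :
    z ∈ Subalgebra.center k (GCA k) := by
  rw [Subalgebra.mem_center_iff]
  intro b
  induction b using gca_induction k with
  | hs r => exact Algebra.commutes r z
  | hx => exact hx
  | hy => exact hy
  | hm a b h1 h2 => rw [mul_assoc, h2, ← mul_assoc, h1, mul_assoc]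
  | ha a b h1 h2 => rw [add_mul, mul_add, h1, h2]

theorem x3_center : gx k ^ 3 ∈ Subalgebra.center k (GCA k) :=
  mem_center k (by rw [← pow_succ', ← pow_succ]) (rel1 k).symm

theorem y3_center : gy k ^ 3 ∈ Subalgebra.center k (GCA k) :=
  mem_center k (rel2 k) (by rw [← pow_succ', ← pow_succ])

theorem alpha_center : gα k ∈ Subalgebra.center k (GCA k) := by
  apply mem_center
  · have h := rel1 k
    rw [← sub_eq_zero] at h ⊢
    rw [← h, gα]
    simp only [mul_add, add_mul, mul_sub, sub_mul, pow_succ, pow_zero, one_mul, mul_assoc]; abel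
  · have h := (rel3 k).symm
    rw [← sub_eq_zero] at h ⊢
    rw [← h, gα]
    simp only [mul_add, add_mul, mul_sub, sub_mul, pow_succ, pow_zero, one_mul, mul_assoc]; abel

theorem beta_center : gβ k ∈ Subalgebra.center k (GCA k) := by
  apply mem_center
  · have h := rel3 k
    rw [← sub_eq_zero] at h ⊢
    rw [← h, gβ]
    simp only [mul_add, add_mul, mul_sub, sub_mul, pow_succ, pow_zero, one_mul, mul_assoc]; abel
  · have h := (rel2 k).symm
    rw [← sub_eq_zero] at h ⊢
    rw [← h, gβ]
    simp only [mul_add, add_mul, mul_sub, sub_mul, pow_succ, pow_zero, one_mul, mul_assoc]; abel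

theorem comm_of_center {z : GCA k} (h : z ∈ Subalgebra.center k (GCA k)) (b : GCA k) :
    b * z = z * b := (Subalgebra.mem_center_iff.1 h) b

theorem gamma_center : gγ k ∈ Subalgebra.center k (GCA k) := by
  apply mem_center
  · have h1 := comm_of_center k (beta_center k) (gx k ^ 2)
    have h1' := comm_of_center k (beta_center k) (gx k)
    have h2 := comm_of_center k (x3_center k) (gy k ^ 2)
    rw [← sub_eq_zero] at h1 h2 h1' ⊢
    have : gx k * gγ k - gγ k * gx k = gx k * (gx k * gβ k) - gx k * gβ k * gx k
       + (gy k ^ 2 * gx k ^ 3 - gx k ^ 3 * gy k ^ 2) := by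
      rw [gγ, gβ]; simp only [mul_add, add_mul, mul_sub, sub_mul, pow_succ, pow_zero, one_mul, mul_assoc]; abel
    rw [this, h2, add_zero, mul_assoc, ← mul_sub, h1', mul_zero]
  · have h1' := comm_of_center k (alpha_center k) (gy k)
    have h2 := comm_of_center k (y3_center k) (gx k ^ 2)
    rw [← sub_eq_zero] at h1' h2 ⊢
    have : gy k * gγ k - gγ k * gy k = (gy k * gα k - gα k * gy k) * gy k
       + (gx k ^ 2 * gy k ^ 3 - gy k ^ 3 * gx k ^ 2) := by
      rw [gγ, gα]; simp only [mul_add, add_mul, mul_sub, sub_mul, pow_succ, pow_zero, one_mul, mul_assoc]; abel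
    rw [this, h2, add_zero, h1', zero_mul]

/-- The subalgebra `S`. -/
abbrev SS : Subalgebra k (GCA k) :=
  Algebra.adjoin k ({gx k ^ 3, gy k ^ 3, gα k, gβ k, gγ k} : Set (GCA k))

/-- The `S`-span of the 18 elements. -/
abbrev NN : Submodule (SS k) (GCA k) := Submodule.span (SS k) (Set.range (gcaBasis k))

theorem smul_mem_NN {s n : GCA k} (hs : s ∈ SS k) (hn : n ∈ NN k) : s * n ∈ NN k :=
  (NN k).smul_mem ⟨s, hs⟩ hn

theorem x3_S : gx k ^ 3 ∈ SS k := Algebra.subset_adjoin (by simp)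
theorem y3_S : gy k ^ 3 ∈ SS k := Algebra.subset_adjoin (by simp)
theorem alpha_S : gα k ∈ SS k := Algebra.subset_adjoin (by simp)
theorem beta_S : gβ k ∈ SS k := Algebra.subset_adjoin (by simp)
theorem gamma_S : gγ k ∈ SS k := Algebra.subset_adjoin (by simp)

theorem basis_mem (i : Fin 18) : gcaBasis k i ∈ NN k := Submodule.subset_span ⟨i, rfl⟩

theorem NN_sub {N : Submodule (SS k) (GCA k)} {a b : GCA k} (ha : a ∈ N) (hb : b ∈ N) :
    a - b ∈ N := by
  have h := N.add_mem ha (N.smul_mem (algebraMap k (SS k) (-1)) hb)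
  have e : a + algebraMap k (SS k) (-1) • b = a - b := by
    rw [Subalgebra.smul_def]
    simp [sub_eq_add_neg]
    exact neg_one_mul b
  rwa [e] at h

theorem ind3 {P : ℕ → Prop} (h0 : P 0) (h1 : P 1) (h2 : P 2) (hs : ∀ n, P n → P (n + 3)) :
    ∀ n, P n
  | 0 => h0
  | 1 => h1
  | 2 => h2
  | n + 3 => hs n (ind3 h0 h1 h2 hs n)

/-- The words `x^i y^j`. -/
def UU (i j : ℕ) : GCA k := gx k ^ i * gy k ^ j

/-- The words `x^i (y x) y^j`. -/
def VV (i j : ℕ) : GCA k := gx k ^ i * (gy k * gx k) * gy k ^ j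

theorem UU_x (i j : ℕ) : UU k (i + 3) j = gx k ^ 3 * UU k i j := by
  rw [UU, UU, add_comm, pow_add, mul_assoc]

theorem UU_y (i j : ℕ) : UU k i (j + 3) = gy k ^ 3 * UU k i j := by
  rw [UU, UU, pow_add, ← mul_assoc, comm_of_center k (y3_center k)]

theorem VV_x (i j : ℕ) : VV k (i + 3) j = gx k ^ 3 * VV k i j := by
  rw [VV, VV, add_comm, pow_add]; simp only [mul_assoc]

theorem VV_y (i j : ℕ) : VV k i (j + 3) = gy k ^ 3 * VV k i j := by
  rw [VV, VV, pow_add, ← mul_assoc, comm_of_center k (y3_center k)]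

theorem UU_mem (i j : ℕ) : UU k i j ∈ NN k := by
  induction i using ind3 generalizing j with
  | hs n ih => rw [UU_x]; exact smul_mem_NN k (x3_S k) (ih j)
  | h0 =>
    induction j using ind3 with
    | hs n ih => rw [UU_y]; exact smul_mem_NN k (y3_S k) ih
    | h0 => simpa [UU, gcaBasis] using basis_mem k 0
    | h1 => simpa [UU, gcaBasis] using basis_mem k 2
    | h2 => simpa [UU, gcaBasis] using basis_mem k 6
  | h1 =>
    induction j using ind3 with
    | hs n ih => rw [UU_y]; exact smul_mem_NN k (y3_S k) ih
    | h0 => simpa [UU, gcaBasis] using basis_mem k 1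
    | h1 => simpa [UU, gcaBasis] using basis_mem k 4
    | h2 => simpa [UU, gcaBasis] using basis_mem k 8
  | h2 =>
    induction j using ind3 with
    | hs n ih => rw [UU_y]; exact smul_mem_NN k (y3_S k) ih
    | h0 => simpa [UU, gcaBasis] using basis_mem k 3
    | h1 => simpa [UU, gcaBasis] using basis_mem k 7
    | h2 => simpa [UU, gcaBasis] using basis_mem k 11

theorem VV00 : VV k 0 0 = gcaBasis k 5 := by simp [VV, gcaBasis]
theorem VV11 : VV k 1 1 = gcaBasis k 12 := by simp [VV, gcaBasis, mul_assoc]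
theorem VV12 : VV k 1 2 = gcaBasis k 16 := by simp [VV, gcaBasis, mul_assoc]

theorem VV01 : VV k 0 1 = gβ k * UU k 0 0 - UU k 1 2 - gcaBasis k 9 := by
  change _ = _ - gy k ^ 2 * gx k
  simp only [VV, UU, gβ]
  simp only [mul_add, add_mul, mul_sub, sub_mul, pow_succ, pow_zero, one_mul, mul_one, mul_assoc]
  abel

theorem VV02 : VV k 0 2 = gβ k * UU k 0 1 - UU k 1 3 - gcaBasis k 14 := by
  change _ = _ - gy k ^ 2 * gx k * gy k
  simp only [VV, UU, gβ]
  simp only [mul_add, add_mul, mul_sub, sub_mul, pow_succ, pow_zero, one_mul, mul_one, mul_assoc]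
  abel

theorem VV10 : VV k 1 0 = gα k * UU k 0 0 - UU k 2 1 - gcaBasis k 10 := by
  change _ = _ - gy k * gx k ^ 2
  simp only [VV, UU, gα]
  simp only [mul_add, add_mul, mul_sub, sub_mul, pow_succ, pow_zero, one_mul, mul_one, mul_assoc]
  abel

theorem VV20 : VV k 2 0 = gα k * UU k 1 0 - UU k 3 1 - gcaBasis k 13 := by
  have h := comm_of_center k (alpha_center k) (gx k)
  change _ = _ - gx k * gy k * gx k ^ 2
  simp only [VV, UU, pow_one, pow_zero, mul_one]
  rw [← h, gα]
  simp only [mul_add, add_mul, mul_sub, sub_mul, pow_succ, pow_zero, one_mul, mul_one, mul_assoc]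
  abel

theorem VV21 : VV k 2 1 = gβ k * UU k 2 0 - UU k 3 2 - gcaBasis k 15 := by
  have h := comm_of_center k (beta_center k) (gx k ^ 2)
  change _ = _ - gx k ^ 2 * gy k ^ 2 * gx k
  simp only [VV, UU, pow_zero, mul_one]
  rw [← h, gβ]
  simp only [mul_add, add_mul, mul_sub, sub_mul, pow_succ, pow_zero, one_mul, mul_one, mul_assoc]
  abel

theorem VV22 : VV k 2 2 = gβ k * UU k 2 1 - UU k 3 3 - gcaBasis k 17 := by
  have h := comm_of_center k (beta_center k) (gx k ^ 2)
  change _ = _ - gx k ^ 2 * gy k ^ 2 * gx k * gy k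
  simp only [VV, UU]
  rw [← mul_assoc (gβ k), ← h, gβ]
  simp only [mul_add, add_mul, mul_sub, sub_mul, pow_succ, pow_zero, one_mul, mul_one, mul_assoc]
  abel

theorem VV_mem (i j : ℕ) : VV k i j ∈ NN k := by
  induction i using ind3 generalizing j with
  | hs n ih => rw [VV_x]; exact smul_mem_NN k (x3_S k) (ih j)
  | h0 =>
    induction j using ind3 with
    | hs n ih => rw [VV_y]; exact smul_mem_NN k (y3_S k) ih
    | h0 => rw [VV00]; exact basis_mem k _
    | h1 =>
      rw [VV01]
      exact NN_sub k (NN_sub k (smul_mem_NN k (beta_S k) (UU_mem k _ _)) (UU_mem k _ _))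
        (basis_mem k _)
    | h2 =>
      rw [VV02]
      exact NN_sub k (NN_sub k (smul_mem_NN k (beta_S k) (UU_mem k _ _)) (UU_mem k _ _))
        (basis_mem k _)
  | h1 =>
    induction j using ind3 with
    | hs n ih => rw [VV_y]; exact smul_mem_NN k (y3_S k) ih
    | h0 =>
      rw [VV10]
      exact NN_sub k (NN_sub k (smul_mem_NN k (alpha_S k) (UU_mem k _ _)) (UU_mem k _ _))
        (basis_mem k _)
    | h1 => rw [VV11]; exact basis_mem k _
    | h2 => rw [VV12]; exact basis_mem k _
  | h2 =>
    induction j using ind3 with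
    | hs n ih => rw [VV_y]; exact smul_mem_NN k (y3_S k) ih
    | h0 =>
      rw [VV20]
      exact NN_sub k (NN_sub k (smul_mem_NN k (alpha_S k) (UU_mem k _ _)) (UU_mem k _ _))
        (basis_mem k _)
    | h1 =>
      rw [VV21]
      exact NN_sub k (NN_sub k (smul_mem_NN k (beta_S k) (UU_mem k _ _)) (UU_mem k _ _))
        (basis_mem k _)
    | h2 =>
      rw [VV22]
      exact NN_sub k (NN_sub k (smul_mem_NN k (beta_S k) (UU_mem k _ _)) (UU_mem k _ _))
        (basis_mem k _)

/-- The `S`-span of all the words `x^i y^j` and `x^i (y x) y^j`. -/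
abbrev MM : Submodule (SS k) (GCA k) :=
  Submodule.span (SS k) (Set.range (fun p : ℕ × ℕ => UU k p.1 p.2) ∪
    Set.range (fun p : ℕ × ℕ => VV k p.1 p.2))

theorem MM_le : MM k ≤ NN k := by
  refine Submodule.span_le.2 ?_
  rintro _ (⟨p, rfl⟩ | ⟨p, rfl⟩)
  · exact UU_mem k _ _
  · exact VV_mem k _ _

theorem UU_MM (i j : ℕ) : UU k i j ∈ MM k := Submodule.subset_span (Or.inl ⟨(i, j), rfl⟩)
theorem VV_MM (i j : ℕ) : VV k i j ∈ MM k := Submodule.subset_span (Or.inr ⟨(i, j), rfl⟩)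

theorem smul_mem_MM {s n : GCA k} (hs : s ∈ SS k) (hn : n ∈ MM k) : s * n ∈ MM k :=
  (MM k).smul_mem ⟨s, hs⟩ hn

theorem SS_le : SS k ≤ Subalgebra.center k (GCA k) := by
  refine Algebra.adjoin_le ?_
  rintro z (rfl | rfl | rfl | rfl | rfl)
  exacts [x3_center k, y3_center k, alpha_center k, beta_center k, gamma_center k]

theorem mul_MM {t : GCA k} (hU : ∀ i j, t * UU k i j ∈ MM k) (hV : ∀ i j, t * VV k i j ∈ MM k)
    (n : GCA k) (hn : n ∈ MM k) : t * n ∈ MM k := by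
  induction hn using Submodule.span_induction with
  | mem z hz =>
    rcases hz with ⟨p, rfl⟩ | ⟨p, rfl⟩
    exacts [hU _ _, hV _ _]
  | zero => simp
  | add a b _ _ h1 h2 => rw [mul_add]; exact add_mem h1 h2
  | smul s a _ h =>
    rw [Subalgebra.smul_def, smul_eq_mul, ← mul_assoc, comm_of_center k (SS_le k s.2), mul_assoc]
    exact smul_mem_MM k s.2 h

theorem x_UU (i j : ℕ) : gx k * UU k i j = UU k (i + 1) j := by
  rw [UU, UU, pow_succ', mul_assoc]

theorem x_VV (i j : ℕ) : gx k * VV k i j = VV k (i + 1) j := by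
  rw [VV, VV, pow_succ']; simp only [mul_assoc]

theorem y_UU2 (j : ℕ) :
    gy k * UU k 2 j = gα k * UU k 0 j - UU k 2 (j + 1) - VV k 1 j := by
  simp only [VV, UU, gα, pow_succ' (gy k)]
  simp only [mul_add, add_mul, mul_sub, sub_mul, pow_succ, pow_zero, one_mul, mul_one, mul_assoc]
  abel

theorem y_VV0 (j : ℕ) :
    gy k * VV k 0 j = gβ k * UU k 0 j - UU k 1 (j + 2) - VV k 0 (j + 1) := by
  simp only [VV, UU, gβ, pow_succ' (gy k), show j + 2 = (j + 1) + 1 from rfl]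
  simp only [mul_add, add_mul, mul_sub, sub_mul, pow_succ, pow_zero, one_mul, mul_one, mul_assoc]
  abel

theorem gamma_eq : gγ k = (gy k * gx k) ^ 2 - gx k ^ 2 * gy k ^ 2 := by
  rw [gγ, sub_eq_sub_iff_add_eq_add, add_comm, rel3, add_comm]

theorem y_VV1 (j : ℕ) :
    gy k * VV k 1 j = gγ k * UU k 0 j + UU k 2 (j + 2) := by
  simp only [VV, UU, gamma_eq, pow_succ' (gy k), show j + 2 = (j + 1) + 1 from rfl]
  simp only [mul_add, add_mul, mul_sub, sub_mul, pow_succ, pow_zero, one_mul, mul_one, mul_assoc]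
  abel

theorem y_VV2 (j : ℕ) :
    gy k * VV k 2 j
      = gα k * VV k 0 j - gβ k * UU k 2 j + VV k 2 (j + 1) - gγ k * UU k 1 j := by
  have h := comm_of_center k (beta_center k) (gx k ^ 2)
  have h' := comm_of_center k (gamma_center k) (gx k)
  simp only [VV, UU, pow_one]
  rw [← mul_assoc (gβ k), ← mul_assoc (gγ k), ← h, ← h']
  simp only [gα, gβ, gamma_eq, pow_succ' (gy k)]
  simp only [mul_add, add_mul, mul_sub, sub_mul, pow_succ, pow_zero, one_mul, mul_one, mul_assoc]
  abel

theorem y_UU_mem (i j : ℕ) : gy k * UU k i j ∈ MM k := by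
  induction i using ind3 with
  | hs n ih =>
    rw [UU_x, ← mul_assoc, comm_of_center k (x3_center k), mul_assoc]
    exact smul_mem_MM k (x3_S k) ih
  | h0 =>
    have : gy k * UU k 0 j = UU k 0 (j + 1) := by simp [UU, pow_succ']
    rw [this]; exact UU_MM k _ _
  | h1 =>
    have : gy k * UU k 1 j = VV k 0 j := by simp [UU, VV, mul_assoc]
    rw [this]; exact VV_MM k _ _
  | h2 =>
    rw [y_UU2]
    exact NN_sub k (NN_sub k (smul_mem_MM k (alpha_S k) (UU_MM k _ _)) (UU_MM k _ _)) (VV_MM k _ _)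

theorem y_VV_mem (i j : ℕ) : gy k * VV k i j ∈ MM k := by
  induction i using ind3 with
  | hs n ih =>
    rw [VV_x, ← mul_assoc, comm_of_center k (x3_center k), mul_assoc]
    exact smul_mem_MM k (x3_S k) ih
  | h0 =>
    rw [y_VV0]
    exact NN_sub k (NN_sub k (smul_mem_MM k (beta_S k) (UU_MM k _ _)) (UU_MM k _ _)) (VV_MM k _ _)
  | h1 =>
    rw [y_VV1]
    exact add_mem (smul_mem_MM k (gamma_S k) (UU_MM k _ _)) (UU_MM k _ _)
  | h2 =>
    rw [y_VV2]
    exact NN_sub k (add_mem (NN_sub k (smul_mem_MM k (alpha_S k) (VV_MM k _ _))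
      (smul_mem_MM k (beta_S k) (UU_MM k _ _))) (VV_MM k _ _))
      (smul_mem_MM k (gamma_S k) (UU_MM k _ _))

theorem all_mul_MM (a : GCA k) : ∀ n ∈ MM k, a * n ∈ MM k := by
  induction a using gca_induction k with
  | hs r => intro n hn; exact smul_mem_MM k (Subalgebra.algebraMap_mem _ r) hn
  | hx =>
    exact mul_MM k (fun i j => by rw [x_UU]; exact UU_MM k _ _)
      (fun i j => by rw [x_VV]; exact VV_MM k _ _)
  | hy => exact mul_MM k (y_UU_mem k) (y_VV_mem k)
  | hm a b h1 h2 => intro n hn; rw [mul_assoc]; exact h1 _ (h2 _ hn)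
  | ha a b h1 h2 => intro n hn; rw [add_mul]; exact add_mem (h1 _ hn) (h2 _ hn)

theorem all_mem (a : GCA k) : a ∈ NN k := by
  have h := all_mul_MM k a _ (UU_MM k 0 0)
  simp only [UU, pow_zero, mul_one] at h
  exact MM_le k h

theorem exists_coeff (a : GCA k) : ∃ c : Fin 18 → SS k, a = ∑ i, (c i : GCA k) * gcaBasis k i := by
  obtain ⟨c, hc⟩ := (Submodule.mem_span_range_iff_exists_fun (SS k)).1 (all_mem k a)
  exact ⟨c, hc.symm⟩

open MvPolynomial in
/-- The commutative base ring of the representation. -/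
abbrev RR := Polynomial (MvPolynomial (Fin 4) k)

/-- The endomorphism by which `x` acts. -/
noncomputable abbrev EX : Module.End (RR k) (Fin 6 → RR k) :=
  repX (Polynomial.C (MvPolynomial.X 0))

/-- The endomorphism by which `y` acts. -/
noncomputable abbrev EY : Module.End (RR k) (Fin 6 → RR k) :=
  repY Polynomial.X (Polynomial.C (MvPolynomial.X 1)) (Polynomial.C (MvPolynomial.X 2))
    (Polynomial.C (MvPolynomial.X 3))

/-- The representation of the algebra. -/
noncomputable def rho : GCA k →ₐ[k] Module.End (RR k) (Fin 6 → RR k) :=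
  RingQuot.liftAlgHom k ⟨FreeAlgebra.lift k ![EX k, EY k], by
    intro u v h
    cases h with
    | rel1 =>
      simp only [map_mul, map_pow, FreeAlgebra.lift_ι_apply, Matrix.cons_val_zero,
        Matrix.cons_val_one]
      rw [repX_cube, Algebra.commutes]
    | rel2 =>
      simp only [map_mul, map_pow, FreeAlgebra.lift_ι_apply, Matrix.cons_val_zero,
        Matrix.cons_val_one]
      rw [repY_cube, Algebra.commutes]
    | rel3 =>
      simp only [map_mul, map_add, map_pow, FreeAlgebra.lift_ι_apply, Matrix.cons_val_zero,
        Matrix.cons_val_one]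
      exact rep_rel3 _ _ _ _ _⟩

theorem rho_x : rho k (gx k) = EX k := by
  rw [rho, gx, RingQuot.liftAlgHom_mkAlgHom_apply]; simp

theorem rho_y : rho k (gy k) = EY k := by
  rw [rho, gy, RingQuot.liftAlgHom_mkAlgHom_apply]; simp

/-- The polynomial ring maps onto `S`. -/
noncomputable def Phi : MvPolynomial (Fin 5) k →ₐ[k] GCA k :=
  (Subalgebra.center k (GCA k)).val.comp (MvPolynomial.aeval
    ![⟨_, y3_center k⟩, ⟨_, x3_center k⟩, ⟨_, alpha_center k⟩, ⟨_, beta_center k⟩,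
      ⟨_, gamma_center k⟩])

theorem Phi_surj (s : SS k) : ∃ q, Phi k q = s := by
  have : SS k ≤ (Phi k).range := by
    refine Algebra.adjoin_le ?_
    rintro z (rfl | rfl | rfl | rfl | rfl)
    · exact ⟨MvPolynomial.X 1, by simp [Phi]⟩
    · exact ⟨MvPolynomial.X 0, by simp [Phi]⟩
    · exact ⟨MvPolynomial.X 2, by simp [Phi]⟩
    · exact ⟨MvPolynomial.X 3, by simp [Phi]⟩
    · exact ⟨MvPolynomial.X 4, by simp [Phi]⟩
  exact this s.2

theorem rho_Phi (q : MvPolynomial (Fin 5) k) :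
    rho k (Phi k q) = algebraMap (RR k) (Module.End (RR k) (Fin 6 → RR k))
      (Polynomial.expand _ 3 (MvPolynomial.finSuccEquiv k 4 q)) := by
  have : (rho k).comp (Phi k) = (IsScalarTower.toAlgHom k (RR k) _).comp
      (((Polynomial.expand (MvPolynomial (Fin 4) k) 3).restrictScalars k).comp
        (MvPolynomial.finSuccEquiv k 4).toAlgHom) := by
    apply MvPolynomial.algHom_ext
    intro i
    refine Fin.cases ?_ (fun j => ?_) i
    · have := repY_cube (Polynomial.X : RR k) (Polynomial.C (MvPolynomial.X 1))
        (Polynomial.C (MvPolynomial.X 2)) (Polynomial.C (MvPolynomial.X 3))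
      simpa [Phi, rho_y, MvPolynomial.finSuccEquiv_X_zero] using this
    · have hR : ((IsScalarTower.toAlgHom k (RR k) (Module.End (RR k) (Fin 6 → RR k))).comp
          (((Polynomial.expand (MvPolynomial (Fin 4) k) 3).restrictScalars k).comp
          (MvPolynomial.finSuccEquiv k 4).toAlgHom)) (MvPolynomial.X j.succ)
          = algebraMap (RR k) _ (Polynomial.C (MvPolynomial.X j)) := by
        simp [MvPolynomial.finSuccEquiv_X_succ]
      rw [hR]
      fin_cases j
      · have := repX_cube (Polynomial.C (MvPolynomial.X 0) : RR k)
        simpa [Phi, rho_x] using this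
      · exact Eq.trans (by simp [Phi, gα, rho_x, rho_y]) (rep_alpha (Polynomial.C (MvPolynomial.X 0) : RR k)
          Polynomial.X (Polynomial.C (MvPolynomial.X 1)) (Polynomial.C (MvPolynomial.X 2))
          (Polynomial.C (MvPolynomial.X 3)))
      · exact Eq.trans (by simp [Phi, gβ, rho_x, rho_y]) (rep_beta (Polynomial.C (MvPolynomial.X 0) : RR k)
          Polynomial.X (Polynomial.C (MvPolynomial.X 1)) (Polynomial.C (MvPolynomial.X 2))
          (Polynomial.C (MvPolynomial.X 3)))
      · exact Eq.trans (by simp [Phi, gγ, rho_x, rho_y]) (rep_gamma (Polynomial.C (MvPolynomial.X 0) : RR k)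
          Polynomial.X (Polynomial.C (MvPolynomial.X 1)) (Polynomial.C (MvPolynomial.X 2))
          (Polynomial.C (MvPolynomial.X 3)))
  exact congrArg (fun f => f q) this

set_option maxHeartbeats 1000000 in
theorem indep (s : Fin 18 → SS k) (h : ∑ i, (s i : GCA k) * gcaBasis k i = 0) (i : Fin 18) :
    s i = 0 := by
  choose q hq using fun i => Phi_surj k (s i)
  have h0 := congrArg (fun t => rho k t ![1, 0, 0, 0, 0, 0]) h
  simp only [← hq, map_sum, map_mul, rho_Phi, map_zero, LinearMap.sum_apply,
    Module.End.mul_apply, Module.algebraMap_end_apply, LinearMap.zero_apply] at h0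
  set p : Fin 18 → RR k := fun i => MvPolynomial.finSuccEquiv k 4 (q i)
  have hp' : ∀ i, MvPolynomial.finSuccEquiv k 4 (q i) = p i := fun i => rfl
  simp only [hp'] at h0
  clear_value p
  have e5 := congrFun h0 5
  have e4 := congrFun h0 4
  have e3 := congrFun h0 3
  have e2 := congrFun h0 2
  have e1 := congrFun h0 1
  have e0 := congrFun h0 0
  simp [Fin.sum_univ_succ, gcaBasis, rho_x, rho_y, pow_succ, repX_apply, repY_apply]
    at e0 e1 e2 e3 e4 e5
  have r5 := expand_indep (p 13) (p 15) (p 17) (by linear_combination -e5)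
  obtain ⟨h13, h15, h17⟩ := r5
  have r4 := expand_indep (-p 10) (p 12) (p 16) (by rw [map_neg]; linear_combination e4)
  obtain ⟨h10, h12, h16⟩ := r4
  have r3 := expand_indep (p 5) (-p 9) (-p 14) (by simp only [map_neg]; linear_combination e3)
  obtain ⟨h5, h9, h14⟩ := r3
  rw [neg_eq_zero] at h10 h9 h14
  simp only [h13, h15, h17, h10, h12, h16, h5, h9, h14, map_zero] at e0 e1 e2
  obtain ⟨h0', h2, h6⟩ := expand_indep (p 0) (p 2) (p 6) (by linear_combination e0)
  obtain ⟨h1, h4, h8⟩ := expand_indep (p 1) (p 4) (p 8) (by linear_combination e1)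
  obtain ⟨h3, h7, h11⟩ := expand_indep (p 3) (p 7) (p 11) (by linear_combination e2)
  have hall : p i = 0 := by
    fin_cases i
    exacts [h0', h1, h2, h3, h4, h5, h6, h7, h8, h9, h10, h11, h12, h13, h14, h15, h16, h17]
  have hqi : q i = 0 := by
    rw [← hp'] at hall
    exact (map_eq_zero_iff _ (MvPolynomial.finSuccEquiv k 4).injective).1 hall
  apply Subtype.ext
  rw [← hq, hqi]
  simp

end Alg

end GCAux

theorem stmt4 (k : Type*) [Field k] (h2 : (2 : k) ≠ 0) (h3 : (3 : k) ≠ 0)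
    (ω : k) (hω : IsPrimitiveRoot ω 3) :
    ∀ a : GCA k,
      ∃! c : Fin 18 → Algebra.adjoin k ({gx k ^ 3, gy k ^ 3, gα k, gβ k, gγ k} : Set (GCA k)),
        a = ∑ i, (c i : GCA k) * gcaBasis k i := by
  intro a
  obtain ⟨c, hc⟩ := GCAux.exists_coeff k a
  refine ⟨c, hc, ?_⟩
  intro c' hc'
  funext i
  have := GCAux.indep k (fun i => c' i - c i) (by
    simp only [AddSubgroupClass.coe_sub, sub_mul, Finset.sum_sub_distrib]
    rw [← hc, ← hc', sub_self]) i
  exact sub_eq_zero.1 this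
end

section
/- Let f be a nondegenerate binary cubic form over k such that there exists e ∈ k with e² = −108·Δ(f). Then the generalized Clifford algebra A_f is a free module of rank 18 over the central subalgebra k[γ_f] generated by γ_f, with basis given by the images in A_f of the 18 elements 1; x, y; x², xy, yx, y²; x²y, xy², y²x, yx²; x²y², xyxy, xyx², y²xy; x²y²x, xyxy²; x²y²xy. -/
noncomputable section

open FreeAlgebra

variable (k : Type*) [Field k]

/-- Relations of the generalized Clifford algebra of the binary cubic form
a₀u³ + a₁u²v + a₂uv² + a₃v³. -/
inductive CRel (a₀ a₁ a₂ a₃ : k) : FreeAlgebra k (Fin 2) → FreeAlgebra k (Fin 2) → Prop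
  | r0 : CRel a₀ a₁ a₂ a₃ ((ι k 0) ^ 3) (algebraMap k (FreeAlgebra k (Fin 2)) a₀)
  | r1 : CRel a₀ a₁ a₂ a₃ ((ι k 0) ^ 2 * ι k 1 + ι k 0 * ι k 1 * ι k 0 + ι k 1 * (ι k 0) ^ 2)
      (algebraMap k (FreeAlgebra k (Fin 2)) a₁)
  | r2 : CRel a₀ a₁ a₂ a₃ (ι k 0 * (ι k 1) ^ 2 + ι k 1 * ι k 0 * ι k 1 + (ι k 1) ^ 2 * ι k 0)
      (algebraMap k (FreeAlgebra k (Fin 2)) a₂)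
  | r3 : CRel a₀ a₁ a₂ a₃ ((ι k 1) ^ 3) (algebraMap k (FreeAlgebra k (Fin 2)) a₃)

/-- The generalized Clifford algebra of the binary cubic form a₀u³ + a₁u²v + a₂uv² + a₃v³. -/
abbrev CliffordAlg (a₀ a₁ a₂ a₃ : k) := RingQuot (CRel k a₀ a₁ a₂ a₃)

/-- The generator x of the generalized Clifford algebra. -/
def cx (a₀ a₁ a₂ a₃ : k) : CliffordAlg k a₀ a₁ a₂ a₃ :=
  RingQuot.mkAlgHom k (CRel k a₀ a₁ a₂ a₃) (ι k 0)

/-- The generator y of the generalized Clifford algebra. -/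
def cy (a₀ a₁ a₂ a₃ : k) : CliffordAlg k a₀ a₁ a₂ a₃ :=
  RingQuot.mkAlgHom k (CRel k a₀ a₁ a₂ a₃) (ι k 1)

/-- The discriminant of the binary cubic form a₀u³ + a₁u²v + a₂uv² + a₃v³. -/
def cubicDisc (a₀ a₁ a₂ a₃ : k) : k :=
  -27 * a₀ ^ 2 * a₃ ^ 2 + a₁ ^ 2 * a₂ ^ 2 + 18 * a₀ * a₁ * a₂ * a₃ -
    4 * a₀ * a₂ ^ 3 - 4 * a₁ ^ 3 * a₃

end

noncomputable section

variable (k : Type*) [Field k]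

/-- γ_f = (xy)² − y²x² in the generalized Clifford algebra A_f. -/
def cγ (a₀ a₁ a₂ a₃ : k) : CliffordAlg k a₀ a₁ a₂ a₃ :=
  (cx k a₀ a₁ a₂ a₃ * cy k a₀ a₁ a₂ a₃) ^ 2 - cy k a₀ a₁ a₂ a₃ ^ 2 * cx k a₀ a₁ a₂ a₃ ^ 2

/-- The images in A_f of the 18 basis elements. -/
def cBasis (a₀ a₁ a₂ a₃ : k) : Fin 18 → CliffordAlg k a₀ a₁ a₂ a₃ :=
  letI x := cx k a₀ a₁ a₂ a₃
  letI y := cy k a₀ a₁ a₂ a₃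
  ![1,
    x, y,
    x ^ 2, x * y, y * x, y ^ 2,
    x ^ 2 * y, x * y ^ 2, y ^ 2 * x, y * x ^ 2,
    x ^ 2 * y ^ 2, x * y * x * y, x * y * x ^ 2, y ^ 2 * x * y,
    x ^ 2 * y ^ 2 * x, x * y * x * y ^ 2,
    x ^ 2 * y ^ 2 * x * y]

set_option linter.unusedVariables false
set_option linter.unusedSimpArgs false

/-- The defining relations of the generalized Clifford algebra, for elements of any algebra. -/
structure CubicRels {k B : Type*} [Field k] [Ring B] [Algebra k B] (x y : B)
    (a₀ a₁ a₂ a₃ : k) : Prop where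
  r0 : x * x * x = a₀ • (1 : B)
  r1 : x * x * y + x * y * x + y * x * x = a₁ • (1 : B)
  r2 : x * y * y + y * x * y + y * y * x = a₂ • (1 : B)
  r3 : y * y * y = a₃ • (1 : B)

section Reductions

variable {k B : Type*} [Field k] [Ring B] [Algebra k B] {x y : B} {a₀ a₁ a₂ a₃ : k}

theorem central_x
    (h : CubicRels x y a₀ a₁ a₂ a₃) :
    x * (x * y * x * y - y * y * x * x) = (x * y * x * y - y * y * x * x) * x := by
  linear_combination (norm := skip) h.r1 * x * y - y * h.r0 * y - x * y * h.r1 + y * y * h.r0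
  simp only [mul_add, add_mul, mul_sub, sub_mul, smul_mul_assoc, mul_smul_comm, mul_one, one_mul, mul_assoc, smul_smul, smul_add, smul_sub]
  module

theorem central_y
    (h : CubicRels x y a₀ a₁ a₂ a₃) :
    y * (x * y * x * y - y * y * x * x) = (x * y * x * y - y * y * x * x) * y := by
  linear_combination (norm := skip) -(x * y * h.r2) + h.r2 * x * y + h.r2 * y * x - y * h.r2 * x
  simp only [mul_add, add_mul, mul_sub, sub_mul, smul_mul_assoc, mul_smul_comm, mul_one, one_mul, mul_assoc, smul_smul, smul_add, smul_sub]
  module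

theorem red_xxx
    (h : CubicRels x y a₀ a₁ a₂ a₃) :
    x * (x * x) = (a₀ : k) • (1) := by
  linear_combination (norm := skip) h.r0
  simp only [mul_add, add_mul, mul_sub, sub_mul, smul_mul_assoc, mul_smul_comm, mul_one, one_mul, mul_assoc, smul_smul, smul_add, smul_sub]
  module

theorem red_xyx
    (h : CubicRels x y a₀ a₁ a₂ a₃) :
    x * (y * x) = -(x * x * y) - y * x * x + (a₁ : k) • (1) := by
  linear_combination (norm := skip) h.r1
  simp only [mul_add, add_mul, mul_sub, sub_mul, smul_mul_assoc, mul_smul_comm, mul_one, one_mul, mul_assoc, smul_smul, smul_add, smul_sub]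
  module

theorem red_xxxy
    (h : CubicRels x y a₀ a₁ a₂ a₃) :
    x * (x * x * y) = (a₀ : k) • (y) := by
  linear_combination (norm := skip) h.r0 * y
  simp only [mul_add, add_mul, mul_sub, sub_mul, smul_mul_assoc, mul_smul_comm, mul_one, one_mul, mul_assoc, smul_smul, smul_add, smul_sub]
  module

theorem red_xyyx
    (h : CubicRels x y a₀ a₁ a₂ a₃) :
    x * (y * y * x) = -(x * x * y * y) - x * y * x * y + (a₂ : k) • (x) := by
  linear_combination (norm := skip) h.r2 * x - y * h.r1 + h.r1 * y
  simp only [mul_add, add_mul, mul_sub, sub_mul, smul_mul_assoc, mul_smul_comm, mul_one, one_mul, mul_assoc, smul_smul, smul_add, smul_sub]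
  module

theorem red_xxxyy
    (h : CubicRels x y a₀ a₁ a₂ a₃) :
    x * (x * x * y * y) = (a₀ : k) • (y * y) := by
  linear_combination (norm := skip) h.r0 * y * y
  simp only [mul_add, add_mul, mul_sub, sub_mul, smul_mul_assoc, mul_smul_comm, mul_one, one_mul, mul_assoc, smul_smul, smul_add, smul_sub]
  module

theorem red_xxyxy
    (h : CubicRels x y a₀ a₁ a₂ a₃) :
    x * (x * y * x * y) = -(x * x * y * y * x) - (a₀ : k) • (y * y) + (a₂ : k) • (x * x) := by
  linear_combination (norm := skip) h.r1 * x * y - y * h.r0 * y - x * y * h.r1 + h.r2 * x * x - y * h.r1 * x + h.r1 * y * x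
  simp only [mul_add, add_mul, mul_sub, sub_mul, smul_mul_assoc, mul_smul_comm, mul_one, one_mul, mul_assoc, smul_smul, smul_add, smul_sub]
  module

theorem red_xxyxx
    (h : CubicRels x y a₀ a₁ a₂ a₃) :
    x * (x * y * x * x) = -((a₀ : k) • (x * y)) - (a₀ : k) • (y * x) + (a₁ : k) • (x * x) := by
  linear_combination (norm := skip) h.r1 * x * x - x * y * h.r0 - y * h.r0 * x
  simp only [mul_add, add_mul, mul_sub, sub_mul, smul_mul_assoc, mul_smul_comm, mul_one, one_mul, mul_assoc, smul_smul, smul_add, smul_sub]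
  module

theorem red_xyyxy
    (h : CubicRels x y a₀ a₁ a₂ a₃) :
    x * (y * y * x * y) = -(x * y * x * y * y) + (a₂ : k) • (x * y) - (a₃ : k) • (x * x) := by
  linear_combination (norm := skip) -(h.r2 * y * x) + x * y * h.r2 + y * h.r2 * x - h.r3 * x * x
  simp only [mul_add, add_mul, mul_sub, sub_mul, smul_mul_assoc, mul_smul_comm, mul_one, one_mul, mul_assoc, smul_smul, smul_add, smul_sub]
  module

theorem red_xxxyyx
    (h : CubicRels x y a₀ a₁ a₂ a₃) :
    x * (x * x * y * y * x) = (a₀ : k) • (y * y * x) := by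
  linear_combination (norm := skip) h.r0 * y * y * x
  simp only [mul_add, add_mul, mul_sub, sub_mul, smul_mul_assoc, mul_smul_comm, mul_one, one_mul, mul_assoc, smul_smul, smul_add, smul_sub]
  module

theorem red_xxyxyy
    (h : CubicRels x y a₀ a₁ a₂ a₃) :
    x * (x * y * x * y * y) = -(x * x * y * y * x * y) + (a₂ : k) • (x * x * y) - (a₀ * a₃ : k) • (1) := by
  linear_combination (norm := skip) h.r1 * x * y * y - y * h.r0 * y * y - x * y * h.r1 * y + h.r2 * x * x * y - y * h.r1 * x * y + h.r1 * y * x * y - (a₃ : k) • (h.r0) - h.r3 * x * x * x + y * y * y * h.r0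
  simp only [mul_add, add_mul, mul_sub, sub_mul, smul_mul_assoc, mul_smul_comm, mul_one, one_mul, mul_assoc, smul_smul, smul_add, smul_sub]
  module

theorem red_xxxyyxy
    (h : CubicRels x y a₀ a₁ a₂ a₃) :
    x * (x * x * y * y * x * y) = (a₀ : k) • (y * y * x * y) := by
  linear_combination (norm := skip) h.r0 * y * y * x * y
  simp only [mul_add, add_mul, mul_sub, sub_mul, smul_mul_assoc, mul_smul_comm, mul_one, one_mul, mul_assoc, smul_smul, smul_add, smul_sub]
  module

theorem red_yxy
    (h : CubicRels x y a₀ a₁ a₂ a₃) :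
    y * (x * y) = -(x * y * y) - y * y * x + (a₂ : k) • (1) := by
  linear_combination (norm := skip) h.r2
  simp only [mul_add, add_mul, mul_sub, sub_mul, smul_mul_assoc, mul_smul_comm, mul_one, one_mul, mul_assoc, smul_smul, smul_add, smul_sub]
  module

theorem red_yyy
    (h : CubicRels x y a₀ a₁ a₂ a₃) :
    y * (y * y) = (a₃ : k) • (1) := by
  linear_combination (norm := skip) h.r3
  simp only [mul_add, add_mul, mul_sub, sub_mul, smul_mul_assoc, mul_smul_comm, mul_one, one_mul, mul_assoc, smul_smul, smul_add, smul_sub]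
  module

theorem red_yxxy
    (h : CubicRels x y a₀ a₁ a₂ a₃) :
    y * (x * x * y) = -(x * x * y * y) - x * y * x * y + (a₁ : k) • (y) := by
  linear_combination (norm := skip) h.r1 * y
  simp only [mul_add, add_mul, mul_sub, sub_mul, smul_mul_assoc, mul_smul_comm, mul_one, one_mul, mul_assoc, smul_smul, smul_add, smul_sub]
  module

theorem red_yxyy
    (h : CubicRels x y a₀ a₁ a₂ a₃) :
    y * (x * y * y) = -(y * y * x * y) + (a₂ : k) • (y) - (a₃ : k) • (x) := by
  linear_combination (norm := skip) y * h.r2 - h.r3 * x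
  simp only [mul_add, add_mul, mul_sub, sub_mul, smul_mul_assoc, mul_smul_comm, mul_one, one_mul, mul_assoc, smul_smul, smul_add, smul_sub]
  module

theorem red_yyyx
    (h : CubicRels x y a₀ a₁ a₂ a₃) :
    y * (y * y * x) = (a₃ : k) • (x) := by
  linear_combination (norm := skip) h.r3 * x
  simp only [mul_add, add_mul, mul_sub, sub_mul, smul_mul_assoc, mul_smul_comm, mul_one, one_mul, mul_assoc, smul_smul, smul_add, smul_sub]
  module

theorem red_yyxx
    (h : CubicRels x y a₀ a₁ a₂ a₃) :
    y * (y * x * x) = x * y * x * y - (x * y * x * y - y * y * x * x) := by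
  linear_combination (norm := skip) 
  simp only [mul_add, add_mul, mul_sub, sub_mul, smul_mul_assoc, mul_smul_comm, mul_one, one_mul, mul_assoc, smul_smul, smul_add, smul_sub]
  module

theorem red_yxxyy
    (h : CubicRels x y a₀ a₁ a₂ a₃) :
    y * (x * x * y * y) = -(x * y * x * y * y) + (a₁ : k) • (y * y) - (a₃ : k) • (x * x) := by
  linear_combination (norm := skip) y * h.r1 * y - h.r2 * y * x + x * y * h.r2 - h.r2 * x * y + y * h.r2 * x - h.r3 * x * x
  simp only [mul_add, add_mul, mul_sub, sub_mul, smul_mul_assoc, mul_smul_comm, mul_one, one_mul, mul_assoc, smul_smul, smul_add, smul_sub]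
  module

theorem red_yxyxy
    (h : CubicRels x y a₀ a₁ a₂ a₃) :
    y * (x * y * x * y) = (x * y * x * y - y * y * x * x) * (y) + (a₃ : k) • (x * x) := by
  linear_combination (norm := skip) h.r2 * y * x - x * y * h.r2 + h.r2 * x * y - y * h.r2 * x + h.r3 * x * x
  simp only [mul_add, add_mul, mul_sub, sub_mul, smul_mul_assoc, mul_smul_comm, mul_one, one_mul, mul_assoc, smul_smul, smul_add, smul_sub]
  module

theorem red_yxyxx
    (h : CubicRels x y a₀ a₁ a₂ a₃) :
    y * (x * y * x * x) = x * x * y * y * x + (x * y * x * y - y * y * x * x) * (x) := by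
  linear_combination (norm := skip) y * h.r1 * x - h.r1 * y * x
  simp only [mul_add, add_mul, mul_sub, sub_mul, smul_mul_assoc, mul_smul_comm, mul_one, one_mul, mul_assoc, smul_smul, smul_add, smul_sub]
  module

theorem red_yyyxy
    (h : CubicRels x y a₀ a₁ a₂ a₃) :
    y * (y * y * x * y) = (a₃ : k) • (x * y) := by
  linear_combination (norm := skip) h.r3 * x * y
  simp only [mul_add, add_mul, mul_sub, sub_mul, smul_mul_assoc, mul_smul_comm, mul_one, one_mul, mul_assoc, smul_smul, smul_add, smul_sub]
  module

theorem red_yxxyyx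
    (h : CubicRels x y a₀ a₁ a₂ a₃) :
    y * (x * x * y * y * x) = x * x * y * y * x * y + (x * y * x * y - y * y * x * x) * (x * y) + (a₂ : k) • (y * x * x) + (a₁ : k) • (x * y * y) + (a₁ : k) • (y * y * x) - (a₁ * a₂ : k) • (1) := by
  linear_combination (norm := skip) -(x * x * y * h.r2) + h.r1 * x * y * y - y * h.r0 * y * y - x * y * h.r1 * y + h.r1 * y * y * x - x * y * h.r2 * x - (a₂ : k) • (h.r1) + x * y * y * h.r1 + y * y * h.r0 * y
  simp only [mul_add, add_mul, mul_sub, sub_mul, smul_mul_assoc, mul_smul_comm, mul_one, one_mul, mul_assoc, smul_smul, smul_add, smul_sub]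
  module

theorem red_yxyxyy
    (h : CubicRels x y a₀ a₁ a₂ a₃) :
    y * (x * y * x * y * y) = (x * y * x * y - y * y * x * x) * (y * y) + (a₃ : k) • (x * x * y) := by
  linear_combination (norm := skip) h.r2 * y * x * y - x * y * h.r2 * y + h.r2 * x * y * y - y * h.r2 * x * y + h.r3 * x * x * y
  simp only [mul_add, add_mul, mul_sub, sub_mul, smul_mul_assoc, mul_smul_comm, mul_one, one_mul, mul_assoc, smul_smul, smul_add, smul_sub]
  module

theorem red_yxxyyxy
    (h : CubicRels x y a₀ a₁ a₂ a₃) :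
    y * (x * x * y * y * x * y) = (a₁ : k) • (y * y * x * y) + (x * y * x * y - y * y * x * x) * (x * y * y) - (a₂ : k) • (x * y * x * y) + (a₃ : k) • (x * y * x * x) := by
  linear_combination (norm := skip) -((2 : k) • (x * x * y * h.r2 * y)) + (2 : k) • (h.r1 * x * y * y * y) - (2 : k) • (y * h.r0 * y * y * y) - (2 : k) • (x * y * h.r1 * y * y) + (2 : k) • (h.r2 * x * x * y * y) + (2 : k) • (h.r1 * y * x * y * y) - y * h.r1 * x * y * y + (2 : k) • (h.r1 * y * y * x * y) - x * y * x * y * h.r2 + y * h.r2 * x * y * x - x * y * h.r2 * x * y + h.r2 * y * x * x * y + h.r2 * x * y * x * y - y * x * x * y * h.r2 - h.r2 * y * x * y * x + x * y * h.r2 * y * x - h.r2 * x * y * y * x + y * h.r1 * y * y * x - y * x * y * h.r1 * y - y * y * h.r1 * x * y + y * y * y * h.r0 * y + h.r3 * x * y * x * x - y * y * y * h.r1 * x + y * y * y * y * h.r0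
  simp only [mul_add, add_mul, mul_sub, sub_mul, smul_mul_assoc, mul_smul_comm, mul_one, one_mul, mul_assoc, smul_smul, smul_add, smul_sub]
  module

end Reductions

/-- The action of x on coordinates with respect to the 18 basis elements. -/
def actXFun {R : Type*} [CommRing R] (a₀ a₁ a₂ a₃ t : R) (v : Fin 18 → R) : Fin 18 → R :=
  ![a₀ * v 3 + a₁ * v 5 - a₀ * a₃ * v 16,
    v 0 + a₂ * v 9,
    a₀ * v 7,
    v 1 + a₂ * v 12 + a₁ * v 13 - a₃ * v 14,
    v 2 - a₀ * v 13 + a₂ * v 14,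
    - a₀ * v 13,
    a₀ * v 11 - a₀ * v 12,
    v 4 - v 5 + a₂ * v 16,
    v 6,
    a₀ * v 15,
    - v 5,
    v 8 - v 9,
    - v 9,
    v 10,
    a₀ * v 17,
    - v 12,
    - v 14,
    - v 16]

/-- The action of x as a linear map. -/
def actX {R : Type*} [CommRing R] (a₀ a₁ a₂ a₃ t : R) :
    (Fin 18 → R) →ₗ[R] (Fin 18 → R) where
  toFun := actXFun a₀ a₁ a₂ a₃ t
  map_add' u v := by
    ext i
    fin_cases i <;> simp [actXFun] <;> ring
  map_smul' c v := by
    ext i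
    fin_cases i <;> simp [actXFun] <;> ring

theorem actX_apply {R : Type*} [CommRing R] (a₀ a₁ a₂ a₃ t : R) (v : Fin 18 → R) :
    actX a₀ a₁ a₂ a₃ t v = actXFun a₀ a₁ a₂ a₃ t v := rfl

/-- The action of y on coordinates with respect to the 18 basis elements. -/
def actYFun {R : Type*} [CommRing R] (a₀ a₁ a₂ a₃ t : R) (v : Fin 18 → R) : Fin 18 → R :=
  ![a₂ * v 4 + a₃ * v 6 - t * v 10 - a₁ * a₂ * v 15,
    - a₃ * v 8 + a₃ * v 9 + t * v 13,
    v 0 + a₁ * v 7 + a₂ * v 8 + t * v 12,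
    - a₃ * v 11 + a₃ * v 12,
    a₃ * v 14 + t * v 15,
    v 1,
    v 2 + a₁ * v 11 + t * v 16,
    a₃ * v 16,
    - v 4 + a₁ * v 15 + t * v 17,
    - v 4 + v 5 + a₁ * v 15,
    v 3 + a₂ * v 15,
    - v 7,
    - v 7 + v 10 - a₂ * v 17,
    a₃ * v 17,
    - v 8 + a₁ * v 17,
    v 13,
    - v 11,
    v 15]

/-- The action of y as a linear map. -/
def actY {R : Type*} [CommRing R] (a₀ a₁ a₂ a₃ t : R) :
    (Fin 18 → R) →ₗ[R] (Fin 18 → R) where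
  toFun := actYFun a₀ a₁ a₂ a₃ t
  map_add' u v := by
    ext i
    fin_cases i <;> simp [actYFun] <;> ring
  map_smul' c v := by
    ext i
    fin_cases i <;> simp [actYFun] <;> ring

theorem actY_apply {R : Type*} [CommRing R] (a₀ a₁ a₂ a₃ t : R) (v : Fin 18 → R) :
    actY a₀ a₁ a₂ a₃ t v = actYFun a₀ a₁ a₂ a₃ t v := rfl
/-- The 18 basis words in x and y. -/
def basisWord {B : Type*} [Ring B] (x y : B) : Fin 18 → B :=
  ![1,
    x,
    y,
    x * x,
    x * y,
    y * x,
    y * y,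
    x * x * y,
    x * y * y,
    y * y * x,
    y * x * x,
    x * x * y * y,
    x * y * x * y,
    x * y * x * x,
    y * y * x * y,
    x * x * y * y * x,
    x * y * x * y * y,
    x * x * y * y * x * y]

section Membership

variable {k B : Type*} [Field k] [Ring B] [Algebra k B] {x y : B} {a₀ a₁ a₂ a₃ : k}

theorem mem_x (h : CubicRels x y a₀ a₁ a₂ a₃)
    (S : AddSubgroup B) (hk : ∀ (c : k) (s : B), s ∈ S → c • s ∈ S)
    (hγ : ∀ s ∈ S, (x * y * x * y - y * y * x * x) * s ∈ S)
    (hb : ∀ i, basisWord x y i ∈ S) :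
    ∀ i, x * basisWord x y i ∈ S := by
  have hγ1 : x * y * x * y - y * y * x * x ∈ S := by
    simpa [basisWord] using hγ _ (hb 0)
  have b0 : 1 ∈ S := hb 0
  have b1 : x ∈ S := hb 1
  have b2 : y ∈ S := hb 2
  have b3 : x * x ∈ S := hb 3
  have b4 : x * y ∈ S := hb 4
  have b5 : y * x ∈ S := hb 5
  have b6 : y * y ∈ S := hb 6
  have b7 : x * x * y ∈ S := hb 7
  have b8 : x * y * y ∈ S := hb 8
  have b9 : y * y * x ∈ S := hb 9
  have b10 : y * x * x ∈ S := hb 10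
  have b11 : x * x * y * y ∈ S := hb 11
  have b12 : x * y * x * y ∈ S := hb 12
  have b13 : x * y * x * x ∈ S := hb 13
  have b14 : y * y * x * y ∈ S := hb 14
  have b15 : x * x * y * y * x ∈ S := hb 15
  have b16 : x * y * x * y * y ∈ S := hb 16
  have b17 : x * x * y * y * x * y ∈ S := hb 17
  intro i
  fin_cases i
  · change x * (1) ∈ S
    simpa only [mul_one] using b1
  · change x * (x) ∈ S
    simpa only [mul_assoc] using b3
  · change x * (y) ∈ S
    simpa only [mul_assoc] using b4
  · change x * (x * x) ∈ S
    rw [red_xxx h]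
    exact (hk _ _ b0)
  · change x * (x * y) ∈ S
    simpa only [mul_assoc] using b7
  · change x * (y * x) ∈ S
    rw [red_xyx h]
    exact (S.add_mem (S.sub_mem (S.neg_mem b7) b10) (hk _ _ b0))
  · change x * (y * y) ∈ S
    simpa only [mul_assoc] using b8
  · change x * (x * x * y) ∈ S
    rw [red_xxxy h]
    exact (hk _ _ b2)
  · change x * (x * y * y) ∈ S
    simpa only [mul_assoc] using b11
  · change x * (y * y * x) ∈ S
    rw [red_xyyx h]
    exact (S.add_mem (S.sub_mem (S.neg_mem b11) b12) (hk _ _ b1))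
  · change x * (y * x * x) ∈ S
    simpa only [mul_assoc] using b13
  · change x * (x * x * y * y) ∈ S
    rw [red_xxxyy h]
    exact (hk _ _ b6)
  · change x * (x * y * x * y) ∈ S
    rw [red_xxyxy h]
    exact (S.add_mem (S.sub_mem (S.neg_mem b15) (hk _ _ b6)) (hk _ _ b3))
  · change x * (x * y * x * x) ∈ S
    rw [red_xxyxx h]
    exact (S.add_mem (S.sub_mem (S.neg_mem (hk _ _ b4)) (hk _ _ b5)) (hk _ _ b3))
  · change x * (y * y * x * y) ∈ S
    rw [red_xyyxy h]
    exact (S.sub_mem (S.add_mem (S.neg_mem b16) (hk _ _ b4)) (hk _ _ b3))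
  · change x * (x * x * y * y * x) ∈ S
    rw [red_xxxyyx h]
    exact (hk _ _ b9)
  · change x * (x * y * x * y * y) ∈ S
    rw [red_xxyxyy h]
    exact (S.sub_mem (S.add_mem (S.neg_mem b17) (hk _ _ b7)) (hk _ _ b0))
  · change x * (x * x * y * y * x * y) ∈ S
    rw [red_xxxyyxy h]
    exact (hk _ _ b14)

theorem mem_y (h : CubicRels x y a₀ a₁ a₂ a₃)
    (S : AddSubgroup B) (hk : ∀ (c : k) (s : B), s ∈ S → c • s ∈ S)
    (hγ : ∀ s ∈ S, (x * y * x * y - y * y * x * x) * s ∈ S)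
    (hb : ∀ i, basisWord x y i ∈ S) :
    ∀ i, y * basisWord x y i ∈ S := by
  have hγ1 : x * y * x * y - y * y * x * x ∈ S := by
    simpa [basisWord] using hγ _ (hb 0)
  have b0 : 1 ∈ S := hb 0
  have b1 : x ∈ S := hb 1
  have b2 : y ∈ S := hb 2
  have b3 : x * x ∈ S := hb 3
  have b4 : x * y ∈ S := hb 4
  have b5 : y * x ∈ S := hb 5
  have b6 : y * y ∈ S := hb 6
  have b7 : x * x * y ∈ S := hb 7
  have b8 : x * y * y ∈ S := hb 8
  have b9 : y * y * x ∈ S := hb 9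
  have b10 : y * x * x ∈ S := hb 10
  have b11 : x * x * y * y ∈ S := hb 11
  have b12 : x * y * x * y ∈ S := hb 12
  have b13 : x * y * x * x ∈ S := hb 13
  have b14 : y * y * x * y ∈ S := hb 14
  have b15 : x * x * y * y * x ∈ S := hb 15
  have b16 : x * y * x * y * y ∈ S := hb 16
  have b17 : x * x * y * y * x * y ∈ S := hb 17
  intro i
  fin_cases i
  · change y * (1) ∈ S
    simpa only [mul_one] using b2
  · change y * (x) ∈ S
    simpa only [mul_assoc] using b5
  · change y * (y) ∈ S
    simpa only [mul_assoc] using b6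
  · change y * (x * x) ∈ S
    simpa only [mul_assoc] using b10
  · change y * (x * y) ∈ S
    rw [red_yxy h]
    exact (S.add_mem (S.sub_mem (S.neg_mem b8) b9) (hk _ _ b0))
  · change y * (y * x) ∈ S
    simpa only [mul_assoc] using b9
  · change y * (y * y) ∈ S
    rw [red_yyy h]
    exact (hk _ _ b0)
  · change y * (x * x * y) ∈ S
    rw [red_yxxy h]
    exact (S.add_mem (S.sub_mem (S.neg_mem b11) b12) (hk _ _ b2))
  · change y * (x * y * y) ∈ S
    rw [red_yxyy h]
    exact (S.sub_mem (S.add_mem (S.neg_mem b14) (hk _ _ b2)) (hk _ _ b1))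
  · change y * (y * y * x) ∈ S
    rw [red_yyyx h]
    exact (hk _ _ b1)
  · change y * (y * x * x) ∈ S
    rw [red_yyxx h]
    exact (S.sub_mem b12 hγ1)
  · change y * (x * x * y * y) ∈ S
    rw [red_yxxyy h]
    exact (S.sub_mem (S.add_mem (S.neg_mem b16) (hk _ _ b6)) (hk _ _ b3))
  · change y * (x * y * x * y) ∈ S
    rw [red_yxyxy h]
    exact (S.add_mem (hγ _ b2) (hk _ _ b3))
  · change y * (x * y * x * x) ∈ S
    rw [red_yxyxx h]
    exact (S.add_mem b15 (hγ _ b1))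
  · change y * (y * y * x * y) ∈ S
    rw [red_yyyxy h]
    exact (hk _ _ b4)
  · change y * (x * x * y * y * x) ∈ S
    rw [red_yxxyyx h]
    exact (S.sub_mem (S.add_mem (S.add_mem (S.add_mem (S.add_mem b17 (hγ _ b4)) (hk _ _ b10)) (hk _ _ b8)) (hk _ _ b9)) (hk _ _ b0))
  · change y * (x * y * x * y * y) ∈ S
    rw [red_yxyxyy h]
    exact (S.add_mem (hγ _ b6) (hk _ _ b7))
  · change y * (x * x * y * y * x * y) ∈ S
    rw [red_yxxyyxy h]
    exact (S.add_mem (S.sub_mem (S.add_mem (hk _ _ b14) (hγ _ b8)) (hk _ _ b12)) (hk _ _ b13))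

theorem mem_xy (h : CubicRels x y a₀ a₁ a₂ a₃)
    (S : Set B) (hadd : ∀ s ∈ S, ∀ t ∈ S, s + t ∈ S) (hk : ∀ (c : k), ∀ s ∈ S, c • s ∈ S)
    (hγ : ∀ s ∈ S, (x * y * x * y - y * y * x * x) * s ∈ S)
    (hb : ∀ i, basisWord x y i ∈ S) (i : Fin 18) :
    x * basisWord x y i ∈ S ∧ y * basisWord x y i ∈ S := by
  let T : AddSubgroup B :=
    { carrier := S
      add_mem' := fun {s t} hs ht => hadd s hs t ht
      zero_mem' := by simpa using hk 0 _ (hb 0)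
      neg_mem' := fun {s} hs => by simpa using hk (-1) s hs }
  exact ⟨mem_x h T hk hγ hb i, mem_y h T hk hγ hb i⟩

end Membership
set_option maxHeartbeats 2000000 in
theorem act_rel0 {R : Type*} [CommRing R] (a₀ a₁ a₂ a₃ t : R) (v : Fin 18 → R) :
    actX a₀ a₁ a₂ a₃ t (actX a₀ a₁ a₂ a₃ t (actX a₀ a₁ a₂ a₃ t v)) = a₀ • v := by
  simp only [actX_apply, actY_apply, actXFun, actYFun, Matrix.cons_val]
  ext i
  fin_cases i <;> simp only [Fin.reduceFinMk, Fin.zero_eta, Fin.mk_one, Matrix.cons_val,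
    Pi.smul_apply, Pi.add_apply, Pi.sub_apply, smul_eq_mul] <;> ring

set_option maxHeartbeats 2000000 in
theorem act_rel1 {R : Type*} [CommRing R] (a₀ a₁ a₂ a₃ t : R) (v : Fin 18 → R) :
    actX a₀ a₁ a₂ a₃ t (actX a₀ a₁ a₂ a₃ t (actY a₀ a₁ a₂ a₃ t v))
      + actX a₀ a₁ a₂ a₃ t (actY a₀ a₁ a₂ a₃ t (actX a₀ a₁ a₂ a₃ t v))
      + actY a₀ a₁ a₂ a₃ t (actX a₀ a₁ a₂ a₃ t (actX a₀ a₁ a₂ a₃ t v)) = a₁ • v := by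
  simp only [actX_apply, actY_apply, actXFun, actYFun, Matrix.cons_val]
  ext i
  fin_cases i <;> simp only [Fin.reduceFinMk, Fin.zero_eta, Fin.mk_one, Matrix.cons_val,
    Pi.smul_apply, Pi.add_apply, Pi.sub_apply, smul_eq_mul] <;> ring

set_option maxHeartbeats 2000000 in
theorem act_rel2 {R : Type*} [CommRing R] (a₀ a₁ a₂ a₃ t : R) (v : Fin 18 → R) :
    actX a₀ a₁ a₂ a₃ t (actY a₀ a₁ a₂ a₃ t (actY a₀ a₁ a₂ a₃ t v))
      + actY a₀ a₁ a₂ a₃ t (actX a₀ a₁ a₂ a₃ t (actY a₀ a₁ a₂ a₃ t v))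
      + actY a₀ a₁ a₂ a₃ t (actY a₀ a₁ a₂ a₃ t (actX a₀ a₁ a₂ a₃ t v)) = a₂ • v := by
  simp only [actX_apply, actY_apply, actXFun, actYFun, Matrix.cons_val]
  ext i
  fin_cases i <;> simp only [Fin.reduceFinMk, Fin.zero_eta, Fin.mk_one, Matrix.cons_val,
    Pi.smul_apply, Pi.add_apply, Pi.sub_apply, smul_eq_mul] <;> ring

set_option maxHeartbeats 2000000 in
theorem act_rel3 {R : Type*} [CommRing R] (a₀ a₁ a₂ a₃ t : R) (v : Fin 18 → R) :
    actY a₀ a₁ a₂ a₃ t (actY a₀ a₁ a₂ a₃ t (actY a₀ a₁ a₂ a₃ t v)) = a₃ • v := by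
  simp only [actX_apply, actY_apply, actXFun, actYFun, Matrix.cons_val]
  ext i
  fin_cases i <;> simp only [Fin.reduceFinMk, Fin.zero_eta, Fin.mk_one, Matrix.cons_val,
    Pi.smul_apply, Pi.add_apply, Pi.sub_apply, smul_eq_mul] <;> ring

set_option maxHeartbeats 2000000 in
theorem act_gamma {R : Type*} [CommRing R] (a₀ a₁ a₂ a₃ t : R) (v : Fin 18 → R) :
    actX a₀ a₁ a₂ a₃ t (actY a₀ a₁ a₂ a₃ t (actX a₀ a₁ a₂ a₃ t (actY a₀ a₁ a₂ a₃ t v)))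
      - actY a₀ a₁ a₂ a₃ t (actY a₀ a₁ a₂ a₃ t (actX a₀ a₁ a₂ a₃ t (actX a₀ a₁ a₂ a₃ t v))) = t • v := by
  simp only [actX_apply, actY_apply, actXFun, actYFun, Matrix.cons_val]
  ext i
  fin_cases i <;> simp only [Fin.reduceFinMk, Fin.zero_eta, Fin.mk_one, Matrix.cons_val,
    Pi.smul_apply, Pi.add_apply, Pi.sub_apply, smul_eq_mul] <;> ring

set_option maxHeartbeats 2000000 in
theorem act_basis {R : Type*} [CommRing R] (a₀ a₁ a₂ a₃ t : R) (i : Fin 18) :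
    basisWord (actX a₀ a₁ a₂ a₃ t : Module.End R (Fin 18 → R)) (actY a₀ a₁ a₂ a₃ t) i
      (Pi.single 0 1) = Pi.single i 1 := by
  have h0 : (Pi.single 0 1 : Fin 18 → R) =
      ![1, 0, 0, 0, 0, 0, 0, 0, 0, 0, 0, 0, 0, 0, 0, 0, 0, 0] := by
    ext j
    fin_cases j <;> rfl
  rw [h0]
  fin_cases i <;>
    simp only [basisWord, Fin.reduceFinMk, Fin.zero_eta, Fin.mk_one, Matrix.cons_val,
      Module.End.mul_apply, Module.End.one_apply, actX_apply, actY_apply, actXFun, actYFun] <;>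
    ext j <;> fin_cases j <;> simp
section Main

variable {k : Type*} [Field k]

theorem rels_cx_cy (a₀ a₁ a₂ a₃ : k) :
    CubicRels (cx k a₀ a₁ a₂ a₃) (cy k a₀ a₁ a₂ a₃) a₀ a₁ a₂ a₃ := by
  constructor
  · have := RingQuot.mkAlgHom_rel k (CRel.r0 (a₀ := a₀) (a₁ := a₁) (a₂ := a₂) (a₃ := a₃))
    rw [AlgHom.commutes, Algebra.algebraMap_eq_smul_one] at this
    rw [← this]
    simp only [map_pow, map_mul, map_add, cx, cy, pow_succ, pow_zero, one_mul, mul_assoc]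
  · have := RingQuot.mkAlgHom_rel k (CRel.r1 (a₀ := a₀) (a₁ := a₁) (a₂ := a₂) (a₃ := a₃))
    rw [AlgHom.commutes, Algebra.algebraMap_eq_smul_one] at this
    rw [← this]
    simp only [map_pow, map_mul, map_add, cx, cy, pow_succ, pow_zero, one_mul, mul_assoc]
  · have := RingQuot.mkAlgHom_rel k (CRel.r2 (a₀ := a₀) (a₁ := a₁) (a₂ := a₂) (a₃ := a₃))
    rw [AlgHom.commutes, Algebra.algebraMap_eq_smul_one] at this
    rw [← this]
    simp only [map_pow, map_mul, map_add, cx, cy, pow_succ, pow_zero, one_mul, mul_assoc]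
  · have := RingQuot.mkAlgHom_rel k (CRel.r3 (a₀ := a₀) (a₁ := a₁) (a₂ := a₂) (a₃ := a₃))
    rw [AlgHom.commutes, Algebra.algebraMap_eq_smul_one] at this
    rw [← this]
    simp only [map_pow, map_mul, map_add, cx, cy, pow_succ, pow_zero, one_mul, mul_assoc]

theorem cγ_eq (a₀ a₁ a₂ a₃ : k) :
    cγ k a₀ a₁ a₂ a₃ = cx k a₀ a₁ a₂ a₃ * cy k a₀ a₁ a₂ a₃ * cx k a₀ a₁ a₂ a₃ * cy k a₀ a₁ a₂ a₃
      - cy k a₀ a₁ a₂ a₃ * cy k a₀ a₁ a₂ a₃ * cx k a₀ a₁ a₂ a₃ * cx k a₀ a₁ a₂ a₃ := by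
  simp only [cγ, pow_two, mul_assoc]

theorem cBasis_eq (a₀ a₁ a₂ a₃ : k) :
    cBasis k a₀ a₁ a₂ a₃ = basisWord (cx k a₀ a₁ a₂ a₃) (cy k a₀ a₁ a₂ a₃) := by
  simp only [cBasis, basisWord, pow_two, mul_assoc]

/-- The span of the basis words over k[γ]. -/
def cSpan (a₀ a₁ a₂ a₃ : k) :
    Submodule (Algebra.adjoin k ({cγ k a₀ a₁ a₂ a₃} : Set (CliffordAlg k a₀ a₁ a₂ a₃)))
      (CliffordAlg k a₀ a₁ a₂ a₃) :=
  Submodule.span _ (Set.range (cBasis k a₀ a₁ a₂ a₃))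

theorem mul_mem_cSpan (a₀ a₁ a₂ a₃ : k) (z : CliffordAlg k a₀ a₁ a₂ a₃)
    (hz : z * cγ k a₀ a₁ a₂ a₃ = cγ k a₀ a₁ a₂ a₃ * z)
    (hb : ∀ i, z * cBasis k a₀ a₁ a₂ a₃ i ∈ cSpan a₀ a₁ a₂ a₃) :
    ∀ s ∈ cSpan a₀ a₁ a₂ a₃, z * s ∈ cSpan a₀ a₁ a₂ a₃ := by
  intro s hs
  induction hs using Submodule.span_induction with
  | mem s hs =>
    obtain ⟨i, rfl⟩ := hs
    exact hb i
  | zero => rw [mul_zero]; exact Submodule.zero_mem _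
  | add s t _ _ hs ht => rw [mul_add]; exact Submodule.add_mem _ hs ht
  | smul c s _ hs =>
    have hc : z * (c : CliffordAlg k a₀ a₁ a₂ a₃) = c * z := by
      have hle : Algebra.adjoin k ({cγ k a₀ a₁ a₂ a₃} : Set (CliffordAlg k a₀ a₁ a₂ a₃)) ≤
          Subalgebra.centralizer k {z} := by
        rw [Algebra.adjoin_le_iff]
        intro w hw
        rw [Set.mem_singleton_iff] at hw
        subst hw
        rw [SetLike.mem_coe, Subalgebra.mem_centralizer_iff]
        intro g hg
        rw [Set.mem_singleton_iff] at hg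
        subst hg
        exact hz
      exact (Subalgebra.mem_centralizer_iff k).1 (hle c.2) z rfl
    have : z * (c • s) = c • (z * s) := by
      rw [Subalgebra.smul_def, Subalgebra.smul_def, smul_eq_mul, smul_eq_mul, ← mul_assoc, hc,
        mul_assoc]
    rw [this]
    exact Submodule.smul_mem _ c hs

theorem cSpan_eq_top (a₀ a₁ a₂ a₃ : k) (a : CliffordAlg k a₀ a₁ a₂ a₃) :
    a ∈ cSpan a₀ a₁ a₂ a₃ := by
  have hr := rels_cx_cy a₀ a₁ a₂ a₃
  have hk : ∀ (c : k), ∀ s ∈ cSpan a₀ a₁ a₂ a₃, c • s ∈ cSpan a₀ a₁ a₂ a₃ :=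
    fun c s hs => Submodule.smul_of_tower_mem (cSpan a₀ a₁ a₂ a₃) c hs
  have hb : ∀ i, basisWord (cx k a₀ a₁ a₂ a₃) (cy k a₀ a₁ a₂ a₃) i ∈ cSpan a₀ a₁ a₂ a₃ := by
    intro i
    rw [← cBasis_eq]
    exact Submodule.subset_span ⟨i, rfl⟩
  have hγ : ∀ s ∈ cSpan a₀ a₁ a₂ a₃, cγ k a₀ a₁ a₂ a₃ * s ∈ cSpan a₀ a₁ a₂ a₃ := by
    intro s hs
    exact Submodule.smul_mem (cSpan a₀ a₁ a₂ a₃)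
      (⟨cγ k a₀ a₁ a₂ a₃, Algebra.subset_adjoin rfl⟩ :
        Algebra.adjoin k ({cγ k a₀ a₁ a₂ a₃} : Set (CliffordAlg k a₀ a₁ a₂ a₃))) hs
  have hxy := mem_xy hr {s | s ∈ cSpan a₀ a₁ a₂ a₃}
    (fun s hs t ht => Submodule.add_mem (cSpan a₀ a₁ a₂ a₃) hs ht)
    hk (fun s hs => by rw [← cγ_eq]; exact hγ s hs) hb
  have hx : ∀ s ∈ cSpan a₀ a₁ a₂ a₃, cx k a₀ a₁ a₂ a₃ * s ∈ cSpan a₀ a₁ a₂ a₃ := by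
    apply mul_mem_cSpan
    · rw [cγ_eq]; exact central_x hr
    · rw [cBasis_eq]; exact fun i => (hxy i).1
  have hy : ∀ s ∈ cSpan a₀ a₁ a₂ a₃, cy k a₀ a₁ a₂ a₃ * s ∈ cSpan a₀ a₁ a₂ a₃ := by
    apply mul_mem_cSpan
    · rw [cγ_eq]; exact central_y hr
    · rw [cBasis_eq]; exact fun i => (hxy i).2
  obtain ⟨p, rfl⟩ := RingQuot.mkAlgHom_surjective k (CRel k a₀ a₁ a₂ a₃) a
  have key : ∀ s ∈ cSpan a₀ a₁ a₂ a₃,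
      RingQuot.mkAlgHom k (CRel k a₀ a₁ a₂ a₃) p * s ∈ cSpan a₀ a₁ a₂ a₃ := by
    induction p using FreeAlgebra.induction with
    | grade0 r =>
      intro s hs
      rw [AlgHom.commutes, ← Algebra.smul_def]
      exact hk r s hs
    | grade1 i =>
      fin_cases i
      · exact hx
      · exact hy
    | mul p q hp hq =>
      intro s hs
      rw [map_mul, mul_assoc]
      exact hp _ (hq s hs)
    | add p q hp hq =>
      intro s hs
      rw [map_add, add_mul]
      exact Submodule.add_mem _ (hp s hs) (hq s hs)
  have h1 := key _ (hb 0)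
  change _ * 1 ∈ _ at h1
  rwa [mul_one] at h1

open Polynomial

theorem act_CRel (a₀ a₁ a₂ a₃ : k) ⦃p q : FreeAlgebra k (Fin 2)⦄ (h : CRel k a₀ a₁ a₂ a₃ p q) :
    FreeAlgebra.lift k (A := Module.End k[X] (Fin 18 → k[X]))
      ![actX (C a₀) (C a₁) (C a₂) (C a₃) X, actY (C a₀) (C a₁) (C a₂) (C a₃) X] p =
    FreeAlgebra.lift k
      ![actX (C a₀) (C a₁) (C a₂) (C a₃) X, actY (C a₀) (C a₁) (C a₂) (C a₃) X] q := by
  have hs : ∀ (a : k) (v : Fin 18 → k[X]), a • v = C a • v := by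
    intro a v
    ext1 i
    rw [Pi.smul_apply, Pi.smul_apply, Polynomial.smul_eq_C_mul, smul_eq_mul]
  induction h with
  | r0 =>
    refine LinearMap.ext fun v => ?_
    simp only [pow_succ, pow_zero, one_mul, map_mul, map_add, FreeAlgebra.lift_ι_apply,
      Matrix.cons_val, AlgHom.commutes, Module.algebraMap_end_apply, hs, Module.End.mul_apply,
      LinearMap.add_apply]
    exact act_rel0 _ _ _ _ _ v
  | r1 =>
    refine LinearMap.ext fun v => ?_
    simp only [pow_succ, pow_zero, one_mul, map_mul, map_add, FreeAlgebra.lift_ι_apply,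
      Matrix.cons_val, AlgHom.commutes, Module.algebraMap_end_apply, hs, Module.End.mul_apply,
      LinearMap.add_apply]
    exact act_rel1 _ _ _ _ _ v
  | r2 =>
    refine LinearMap.ext fun v => ?_
    simp only [pow_succ, pow_zero, one_mul, map_mul, map_add, FreeAlgebra.lift_ι_apply,
      Matrix.cons_val, AlgHom.commutes, Module.algebraMap_end_apply, hs, Module.End.mul_apply,
      LinearMap.add_apply]
    exact act_rel2 _ _ _ _ _ v
  | r3 =>
    refine LinearMap.ext fun v => ?_
    simp only [pow_succ, pow_zero, one_mul, map_mul, map_add, FreeAlgebra.lift_ι_apply,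
      Matrix.cons_val, AlgHom.commutes, Module.algebraMap_end_apply, hs, Module.End.mul_apply,
      LinearMap.add_apply]
    exact act_rel3 _ _ _ _ _ v

/-- The representation of the Clifford algebra on k[t]^18. -/
def cRep (a₀ a₁ a₂ a₃ : k) :
    CliffordAlg k a₀ a₁ a₂ a₃ →ₐ[k] Module.End k[X] (Fin 18 → k[X]) :=
  RingQuot.liftAlgHom k ⟨FreeAlgebra.lift k
    ![actX (C a₀) (C a₁) (C a₂) (C a₃) X, actY (C a₀) (C a₁) (C a₂) (C a₃) X],
    act_CRel a₀ a₁ a₂ a₃⟩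

theorem cRep_cx (a₀ a₁ a₂ a₃ : k) :
    cRep a₀ a₁ a₂ a₃ (cx k a₀ a₁ a₂ a₃) = actX (C a₀) (C a₁) (C a₂) (C a₃) X := by
  rw [cRep, cx, RingQuot.liftAlgHom_mkAlgHom_apply, FreeAlgebra.lift_ι_apply]
  rfl

theorem cRep_cy (a₀ a₁ a₂ a₃ : k) :
    cRep a₀ a₁ a₂ a₃ (cy k a₀ a₁ a₂ a₃) = actY (C a₀) (C a₁) (C a₂) (C a₃) X := by
  rw [cRep, cy, RingQuot.liftAlgHom_mkAlgHom_apply, FreeAlgebra.lift_ι_apply]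
  rfl

theorem cRep_cγ (a₀ a₁ a₂ a₃ : k) :
    cRep a₀ a₁ a₂ a₃ (cγ k a₀ a₁ a₂ a₃) = algebraMap k[X] _ X := by
  have h : actX (C a₀) (C a₁) (C a₂) (C a₃) X * actY (C a₀) (C a₁) (C a₂) (C a₃) X *
      actX (C a₀) (C a₁) (C a₂) (C a₃) X * actY (C a₀) (C a₁) (C a₂) (C a₃) X -
      actY (C a₀) (C a₁) (C a₂) (C a₃) X * actY (C a₀) (C a₁) (C a₂) (C a₃) X *
      actX (C a₀) (C a₁) (C a₂) (C a₃) X * actX (C a₀) (C a₁) (C a₂) (C a₃) X =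
      algebraMap k[X] (Module.End k[X] (Fin 18 → k[X])) X :=
    LinearMap.ext fun v => act_gamma (C a₀) (C a₁) (C a₂) (C a₃) X v
  rw [← h, cγ_eq, ← cRep_cx, ← cRep_cy, map_sub]
  simp only [map_mul]

theorem cRep_aeval (a₀ a₁ a₂ a₃ : k) (p : k[X]) (v : Fin 18 → k[X]) :
    cRep a₀ a₁ a₂ a₃ (aeval (cγ k a₀ a₁ a₂ a₃) p) v = p • v := by
  rw [← aeval_algHom_apply, cRep_cγ, aeval_algebraMap_apply, aeval_X_left_apply,
    Module.algebraMap_end_apply]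

theorem cRep_basis (a₀ a₁ a₂ a₃ : k) (i : Fin 18) :
    cRep a₀ a₁ a₂ a₃ (cBasis k a₀ a₁ a₂ a₃ i) (Pi.single 0 1) = Pi.single i 1 := by
  rw [← act_basis (C a₀) (C a₁) (C a₂) (C a₃) X i, ← cRep_cx, ← cRep_cy, cBasis_eq]
  congr 1
  fin_cases i <;> simp only [basisWord, Fin.reduceFinMk, Fin.zero_eta, Fin.mk_one,
    Matrix.cons_val, map_mul, map_one]

theorem cRep_sum (a₀ a₁ a₂ a₃ : k) (p : Fin 18 → k[X]) :
    cRep a₀ a₁ a₂ a₃ (∑ i, aeval (cγ k a₀ a₁ a₂ a₃) (p i) * cBasis k a₀ a₁ a₂ a₃ i)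
      (Pi.single 0 1) = p := by
  rw [map_sum, LinearMap.sum_apply]
  simp only [map_mul, Module.End.mul_apply, cRep_basis, cRep_aeval]
  exact (pi_eq_sum_univ' p).symm

end Main

theorem stmt5 (h2 : (2 : k) ≠ 0) (h3 : (3 : k) ≠ 0)
    (ω : k) (hω : IsPrimitiveRoot ω 3)
    (a₀ a₁ a₂ a₃ : k) (hΔ : cubicDisc k a₀ a₁ a₂ a₃ ≠ 0)
    (e : k) (he : e ^ 2 = -108 * cubicDisc k a₀ a₁ a₂ a₃) :
    ∀ a : CliffordAlg k a₀ a₁ a₂ a₃,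
      ∃! c : Fin 18 → Algebra.adjoin k ({cγ k a₀ a₁ a₂ a₃} : Set (CliffordAlg k a₀ a₁ a₂ a₃)),
        a = ∑ i, (c i : CliffordAlg k a₀ a₁ a₂ a₃) * cBasis k a₀ a₁ a₂ a₃ i := by
  intro a
  have hp : ∀ c : Algebra.adjoin k ({cγ k a₀ a₁ a₂ a₃} : Set (CliffordAlg k a₀ a₁ a₂ a₃)),
      ∃ p : Polynomial k, Polynomial.aeval (cγ k a₀ a₁ a₂ a₃) p = c := by
    rintro ⟨c, hc⟩
    rw [Algebra.adjoin_singleton_eq_range_aeval] at hc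
    exact hc
  have ha := cSpan_eq_top a₀ a₁ a₂ a₃ a
  rw [cSpan, Submodule.mem_span_range_iff_exists_fun] at ha
  obtain ⟨c, hc⟩ := ha
  refine ⟨c, hc.symm, ?_⟩
  intro d hd
  choose p hpc using fun i => hp (c i)
  choose q hqd using fun i => hp (d i)
  have h1 := cRep_sum a₀ a₁ a₂ a₃ p
  have h2 := cRep_sum a₀ a₁ a₂ a₃ q
  simp only [hpc] at h1
  simp only [hqd] at h2
  have hpq : p = q := by
    rw [← h1, ← h2, ← hd]
    exact congrArg (fun z => cRep a₀ a₁ a₂ a₃ z (Pi.single 0 1)) hc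
  funext i
  apply Subtype.ext
  rw [← hqd, ← hpc, hpq]

end
end

section
/- In the binary cubic generic Clifford algebra A the identity δ⁶ = 3ω(1−ω)·x³y³·δ³ + (1+2ω²)·αβ·δ³ + γ³ − x³β³ − y³α³ + α²β² holds; equivalently, setting s = δ³ − (3ω(1−ω)x³y³ + (1+2ω²)αβ)/2, one has s² = γ³ + (1/4)(−27x⁶y⁶ + α²β² + 18x³y³αβ − 4x³β³ − 4y³α³). -/
theorem gc_core {C A : Type*} [CommRing C] [Ring A] [Algebra C A] (x y δ : A) (ω α β a b d : C)
    (hω : ω ^ 2 + ω + 1 = 0)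
    (hyx : y * x = ω • (x * y) + δ) (hδx : δ * x = ω ^ 2 • (x * δ) + α • 1)
    (hyδ : y * δ = ω ^ 2 • (δ * y) + β • 1)
    (hx : x * (x * x) = a • 1) (hy : y * (y * y) = b • 1) (hd : δ * (δ * δ) = d • 1) :
    ((x * y) ^ 2 - y ^ 2 * x ^ 2) ^ 3 =
      (d ^ 2 - 3 * ω * (1 - ω) * (a * b) * d - (1 + 2 * ω ^ 2) * (α * β) * d
        + a * β ^ 3 + b * α ^ 3 - α ^ 2 * β ^ 2) • (1 : A) := by
  have e1 : ∀ z, y * (x * z) = ω • (x * (y * z)) + δ * z := fun z => by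
    rw [← mul_assoc, hyx]; simp [add_mul, mul_assoc]
  have e2 : ∀ z, δ * (x * z) = ω ^ 2 • (x * (δ * z)) + α • z := fun z => by
    rw [← mul_assoc, hδx]; simp [add_mul, mul_assoc]
  have e3 : ∀ z, y * (δ * z) = ω ^ 2 • (δ * (y * z)) + β • z := fun z => by
    rw [← mul_assoc, hyδ]; simp [add_mul, mul_assoc]
  have e4 : ∀ z, x * (x * (x * z)) = a • z := fun z => by
    rw [← mul_assoc x x z, ← mul_assoc, hx]; simp
  have e5 : ∀ z, y * (y * (y * z)) = b • z := fun z => by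
    rw [← mul_assoc y y z, ← mul_assoc, hy]; simp
  have e6 : ∀ z, δ * (δ * (δ * z)) = d • z := fun z => by
    rw [← mul_assoc δ δ z, ← mul_assoc, hd]; simp
  have hw : ω ^ 2 = -ω - 1 := by linear_combination hω
  have hg : (x * y) ^ 2 - y ^ 2 * x ^ 2 =
      (1 - ω) • (x * (δ * y)) + δ * δ + (ω * α) • y + (ω * β) • x := by
    simp only [pow_two, mul_add, mul_assoc, hyx, hδx, hyδ, e1, e2, mul_smul_comm, mul_one,
      smul_add, smul_smul]
    match_scalars <;> grind
  rw [hg, pow_succ', pow_two]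
  simp only [mul_add, add_mul, mul_assoc, hyx, hδx, hyδ, e1, e2, e3, e4, e6, hx, hy, hd,
    smul_mul_assoc, mul_smul_comm, mul_one, smul_add, one_mul, smul_smul]
  match_scalars
  all_goals clear hyx hδx hyδ hx hy hd e1 e2 e3 e4 e5 e6 hg
  all_goals grind

theorem gc_central (k : Type*) [Field k] (z : GCA k) (hx : gx k * z = z * gx k)
    (hy : gy k * z = z * gy k) : z ∈ Subalgebra.center k (GCA k) := by
  rw [Subalgebra.mem_center_iff]
  intro b
  obtain ⟨b, rfl⟩ := RingQuot.mkAlgHom_surjective k (GCRel k) b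
  induction b using FreeAlgebra.induction with
  | grade0 r => rw [AlgHom.commutes]; exact Algebra.commutes r z
  | grade1 i =>
    fin_cases i
    · exact hx
    · exact hy
  | mul a b ha hb => rw [map_mul, mul_assoc, hb, ← mul_assoc, ha, mul_assoc]
  | add a b ha hb => rw [map_add, add_mul, mul_add, ha, hb]

theorem gc_final (k : Type*) [Field k] (h2 : (2 : k) ≠ 0) {C A : Type*} [CommRing C] [Ring A]
    [Algebra k C] [Algebra k A] [Algebra C A] [IsScalarTower k C A]
    (ω : k) (hω : ω ^ 2 + ω + 1 = 0) (X3 Y3 X6 Y6 D3 D6 G3 : A) (a b d α β g : C)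
    (hX3 : X3 = algebraMap C A a) (hY3 : Y3 = algebraMap C A b) (hX6 : X6 = algebraMap C A (a ^ 2))
    (hY6 : Y6 = algebraMap C A (b ^ 2))
    (hD3 : D3 = algebraMap C A d) (hD6 : D6 = algebraMap C A (d ^ 2))
    (hG : G3 = algebraMap C A g)
    (hg : g = (d ^ 2 - 3 * algebraMap k C ω * (1 - algebraMap k C ω) * (a * b) * d
        - (1 + 2 * algebraMap k C ω ^ 2) * (α * β) * d
        + a * β ^ 3 + b * α ^ 3 - α ^ 2 * β ^ 2)) :
    D6 = algebraMap k A (3 * ω * (1 - ω)) * (X3 * Y3) * D3 +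
          algebraMap k A (1 + 2 * ω ^ 2) * (algebraMap C A α * algebraMap C A β) * D3 +
          G3 - X3 * algebraMap C A β ^ 3 - Y3 * algebraMap C A α ^ 3
            + algebraMap C A α ^ 2 * algebraMap C A β ^ 2 ∧
      (D3 - algebraMap k A ((3 * ω * (1 - ω)) / 2) * (X3 * Y3) -
          algebraMap k A ((1 + 2 * ω ^ 2) / 2) * (algebraMap C A α * algebraMap C A β)) ^ 2 =
        G3 + algebraMap k A (1 / 4) *
            (-27 * (X6 * Y6) + algebraMap C A α ^ 2 * algebraMap C A β ^ 2 +
              18 * (X3 * Y3) * (algebraMap C A α * algebraMap C A β) -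
              4 * X3 * algebraMap C A β ^ 3 - 4 * Y3 * algebraMap C A α ^ 3) := by
  have hw : algebraMap k C ω ^ 2 + algebraMap k C ω + 1 = 0 := by
    rw [← map_pow, ← map_add, ← map_one (algebraMap k C), ← map_add, hω, map_zero]
  have hr : 2 * algebraMap k C (1 / 2) = 1 := by
    rw [← map_ofNat (algebraMap k C) 2, ← map_mul, mul_one_div_cancel h2, map_one]
  have h4 : (1 / 4 : k) = (1 / 2) ^ 2 := by norm_num
  have t1 : (3 * ω * (1 - ω)) / 2 = (3 * ω * (1 - ω)) * (1 / 2) := by ring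
  have t2 : (1 + 2 * ω ^ 2) / 2 = (1 + 2 * ω ^ 2) * (1 / 2) := by ring
  rw [h4, t1, t2]
  subst hX3 hY3 hX6 hY6 hD3 hD6 hG
  simp only [IsScalarTower.algebraMap_apply k C A]
  have c27 : (27 : A) = algebraMap C A 27 := (map_ofNat (algebraMap C A) 27).symm
  have c18 : (18 : A) = algebraMap C A 18 := (map_ofNat (algebraMap C A) 18).symm
  have c4 : (4 : A) = algebraMap C A 4 := (map_ofNat (algebraMap C A) 4).symm
  rw [c27, c18, c4]
  simp only [← map_mul, ← map_add, ← map_sub, ← map_pow, ← map_neg]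
  simp only [map_mul (algebraMap k C), map_add (algebraMap k C), map_sub (algebraMap k C),
    map_pow (algebraMap k C), map_one, map_ofNat]
  generalize algebraMap k C ω = w at *
  generalize algebraMap k C (1 / 2) = r at *
  constructor
  · congr 1
    rw [hg]; ring
  · congr 1
    clear h4 t1 t2 c27 c18 c4
    grind

/-- A ring is an algebra over its center. -/
instance gcCenterAlg (k A : Type*) [Field k] [Ring A] [Algebra k A] :
    Algebra (Subalgebra.center k A) A where
  algebraMap := (Subalgebra.center k A).val.toRingHom
  commutes' r x := (Subalgebra.mem_center_iff.1 r.2 x).symm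
  smul_def' _ _ := rfl

instance gcCenterTower (k A : Type*) [Field k] [Ring A] [Algebra k A] :
    IsScalarTower k (Subalgebra.center k A) A :=
  IsScalarTower.of_algebraMap_eq (fun _ => rfl)

theorem gc_general (k : Type*) [Field k] (h2 : (2 : k) ≠ 0) (ω : k) (hw : ω ^ 2 + ω + 1 = 0)
    {A : Type*} [Ring A] [Algebra k A] (x y δ α β : A)
    (hα : α ∈ Subalgebra.center k A) (hβ : β ∈ Subalgebra.center k A)
    (ha : x ^ 3 ∈ Subalgebra.center k A) (hb : y ^ 3 ∈ Subalgebra.center k A)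
    (hd : δ ^ 3 ∈ Subalgebra.center k A)
    (hyx : y * x = ω • (x * y) + δ) (hδx : δ * x = ω ^ 2 • (x * δ) + α)
    (hyδ : y * δ = ω ^ 2 • (δ * y) + β) :
    δ ^ 6 =
        algebraMap k A (3 * ω * (1 - ω)) * (x ^ 3 * y ^ 3) * δ ^ 3 +
          algebraMap k A (1 + 2 * ω ^ 2) * (α * β) * δ ^ 3 +
          ((x * y) ^ 2 - y ^ 2 * x ^ 2) ^ 3 - x ^ 3 * β ^ 3 - y ^ 3 * α ^ 3 + α ^ 2 * β ^ 2 ∧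
      (δ ^ 3 -
          algebraMap k A ((3 * ω * (1 - ω)) / 2) * (x ^ 3 * y ^ 3) -
          algebraMap k A ((1 + 2 * ω ^ 2) / 2) * (α * β)) ^ 2 =
        ((x * y) ^ 2 - y ^ 2 * x ^ 2) ^ 3 +
          algebraMap k A (1 / 4) *
            (-27 * (x ^ 6 * y ^ 6) + α ^ 2 * β ^ 2 +
              18 * (x ^ 3 * y ^ 3) * (α * β) -
              4 * x ^ 3 * β ^ 3 - 4 * y ^ 3 * α ^ 3) := by
  have key := gc_core (C := Subalgebra.center k A) x y δ
    (algebraMap k _ ω) ⟨_, hα⟩ ⟨_, hβ⟩ ⟨_, ha⟩ ⟨_, hb⟩ ⟨_, hd⟩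
    (by rw [← map_pow, ← map_add, ← map_one (algebraMap k _), ← map_add, hw, map_zero])
    (by rw [algebraMap_smul]; exact hyx)
    (by rw [← map_pow, algebraMap_smul, hδx, Subalgebra.smul_def, smul_eq_mul, mul_one])
    (by rw [← map_pow, algebraMap_smul, hyδ, Subalgebra.smul_def, smul_eq_mul, mul_one])
    (by rw [Subalgebra.smul_def, smul_eq_mul, mul_one]; noncomm_ring)
    (by rw [Subalgebra.smul_def, smul_eq_mul, mul_one]; noncomm_ring)
    (by rw [Subalgebra.smul_def, smul_eq_mul, mul_one]; noncomm_ring)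
  rw [← Algebra.algebraMap_eq_smul_one] at key
  exact gc_final k h2 (C := Subalgebra.center k A) ω hw _ _ _ _ _ _ _
    ⟨_, ha⟩ ⟨_, hb⟩ ⟨_, hd⟩ ⟨_, hα⟩ ⟨_, hβ⟩ _ rfl rfl
    (by rw [map_pow]; exact pow_mul x 3 2) (by rw [map_pow]; exact pow_mul y 3 2) rfl
    (by rw [map_pow]; exact pow_mul δ 3 2) key rfl

theorem stmt7 (k : Type*) [Field k] (h2 : (2 : k) ≠ 0) (h3 : (3 : k) ≠ 0)
    (ω : k) (hω : IsPrimitiveRoot ω 3) :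
    gδ k ω ^ 6 =
        algebraMap k (GCA k) (3 * ω * (1 - ω)) * (gx k ^ 3 * gy k ^ 3) * gδ k ω ^ 3 +
          algebraMap k (GCA k) (1 + 2 * ω ^ 2) * (gα k * gβ k) * gδ k ω ^ 3 +
          gγ k ^ 3 - gx k ^ 3 * gβ k ^ 3 - gy k ^ 3 * gα k ^ 3 + gα k ^ 2 * gβ k ^ 2 ∧
      (gδ k ω ^ 3 -
          algebraMap k (GCA k) ((3 * ω * (1 - ω)) / 2) * (gx k ^ 3 * gy k ^ 3) -
          algebraMap k (GCA k) ((1 + 2 * ω ^ 2) / 2) * (gα k * gβ k)) ^ 2 =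
        gγ k ^ 3 +
          algebraMap k (GCA k) (1 / 4) *
            (-27 * (gx k ^ 6 * gy k ^ 6) + gα k ^ 2 * gβ k ^ 2 +
              18 * (gx k ^ 3 * gy k ^ 3) * (gα k * gβ k) -
              4 * gx k ^ 3 * gβ k ^ 3 - 4 * gy k ^ 3 * gα k ^ 3) := by
  have hw : ω ^ 2 + ω + 1 = 0 := by
    have := hω.geom_sum_eq_zero (by norm_num)
    simp [Finset.sum_range_succ] at this
    linear_combination this
  have r1 := gc_rel1 k
  have r2 := gc_rel2 k
  have r3 := gc_rel3 k
  have hα : gα k ∈ Subalgebra.center k (GCA k) := by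
    apply gc_central
    · rw [← sub_eq_zero] at r1 ⊢
      rw [← r1, gα]; noncomm_ring
    · rw [← sub_eq_zero] at r3 ⊢
      rw [← neg_eq_zero, ← r3, gα]; noncomm_ring
  have hβ : gβ k ∈ Subalgebra.center k (GCA k) := by
    apply gc_central
    · rw [← sub_eq_zero] at r3 ⊢
      rw [← r3, gβ]; noncomm_ring
    · rw [← sub_eq_zero] at r2 ⊢
      rw [← neg_eq_zero, ← r2, gβ]; noncomm_ring
  have ha : gx k ^ 3 ∈ Subalgebra.center k (GCA k) :=
    gc_central k _ (by noncomm_ring) r1.symm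
  have hb : gy k ^ 3 ∈ Subalgebra.center k (GCA k) :=
    gc_central k _ r2 (by noncomm_ring)
  have hyx : gy k * gx k = ω • (gx k * gy k) + gδ k ω := by
    rw [gδ, ← Algebra.smul_def]; abel
  have hδx : gδ k ω * gx k = ω ^ 2 • (gx k * gδ k ω) + gα k := by
    rw [gδ, gα, ← Algebra.smul_def]
    simp only [sub_mul, mul_sub, smul_mul_assoc, mul_smul_comm, pow_two, mul_assoc]
    match_scalars <;> grind
  have hyδ : gy k * gδ k ω = ω ^ 2 • (gδ k ω * gy k) + gβ k := by
    rw [gδ, gβ, ← Algebra.smul_def]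
    simp only [sub_mul, mul_sub, smul_mul_assoc, mul_smul_comm, pow_two, mul_assoc]
    match_scalars <;> grind
  have hd : gδ k ω ^ 3 ∈ Subalgebra.center k (GCA k) := by
    have hα' := fun z => (Subalgebra.mem_center_iff.1 hα z)
    have hβ' := fun z => (Subalgebra.mem_center_iff.1 hβ z)
    generalize gδ k ω = δ at *
    generalize gα k = A at *
    generalize gβ k = B at *
    apply gc_central
    · have e : ∀ z, δ * (gx k * z) = ω ^ 2 • (gx k * (δ * z)) + A * z := fun z => by
        rw [← mul_assoc, hδx]; simp [add_mul, mul_assoc]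
      simp only [pow_succ, pow_zero, one_mul, mul_assoc, hδx, mul_add, e, mul_smul_comm, ← hα' δ,
        ← hα' (δ * δ), smul_add, smul_smul]
      match_scalars <;> grind
    · have e : ∀ z, gy k * (δ * z) = ω ^ 2 • (δ * (gy k * z)) + B * z := fun z => by
        rw [← mul_assoc, hyδ]; simp [add_mul, mul_assoc]
      simp only [pow_succ, pow_zero, one_mul, mul_assoc, hyδ, mul_add, e, mul_smul_comm, ← hβ' δ,
        ← hβ' (δ * δ), smul_add, smul_smul]
      match_scalars <;> grind
  exact gc_general k h2 ω hw (gx k) (gy k) (gδ k ω) (gα k) (gβ k) hα hβ ha hb hd hyx hδx hyδ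
end
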